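/- Let p be an odd prime, n a positive integer, and let f ∈ F_{p^n}[X] be of the form f(X) = X^{p^k+1} + h(X) for some positive integer k, where the degree e of h satisfies e < p^k + 1. If f is exceptional planar, then p divides e or p divides e − 1. -/

import Mathlib

open Polynomial

/-- A function on a field of odd characteristic is planar if for every nonzero `ε`
the map `x ↦ f (x + ε) - f x` is a bijection. -/
def IsPlanarOdd {F : Type} [Field F] (f : F → F) : Prop :=
  ∀ ε : F, ε ≠ 0 → Function.Bijective (fun x : F => f (x + ε) - f x)

/-- A polynomial over a finite field `K` (of odd order) is exceptional planar if for
infinitely many positive integers `r` it induces a planar function on the extension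
of `K` of degree `r`. -/
def IsExceptionalPlanarOdd {K : Type} [Field K] [Fintype K] (f : K[X]) : Prop :=
  Set.Infinite {r : ℕ | 0 < r ∧ ∀ (L : Type) [Field L] [Fintype L] [Algebra K L],
      Fintype.card L = Fintype.card K ^ r →
      IsPlanarOdd (fun x : L => Polynomial.aeval x f)}

section Abstract

variable {K A : Type} [Field K] [Fintype K] [CommRing A] [IsDomain A] [Algebra K A]

/-- If `K`-proportionality is detected by the operators, two elements can be separated. -/
theorem pair_lemma (κ : ℕ → A →ₗ[K] A) (q : ℕ) (hq : 0 < q)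
    (P1 : ∀ r a b, κ r (a ^ (q ^ r) * b) = a * κ r b)
    (P3 : ∀ r b, b ≠ 0 → ∃ g, κ r (g * b) ≠ 0)
    (hconst : ∀ s t : A, t ≠ 0 →
      (∀ r : ℕ, ∃ α β : A, α ≠ 0 ∧ α ^ (q ^ r) * s = β ^ (q ^ r) * t) → ∃ c : K, s = c • t)
    (s t : A) (hst : ∀ c : K, s ≠ c • t) :
    ∃ r g, κ r (g * s) ≠ 0 ∧ κ r (g * t) = 0 := by
  by_cases ht : t = 0
  · have hs : s ≠ 0 := by
      have := hst 0
      simpa using this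
    obtain ⟨g, hg⟩ := P3 0 s hs
    exact ⟨0, g, hg, by simp [ht]⟩
  by_contra hcon
  push Not at hcon
  have : ∃ c : K, s = c • t := by
    refine hconst s t ht fun r => ?_
    obtain ⟨b0, hb0⟩ := P3 r 1 one_ne_zero
    rw [mul_one] at hb0
    set Q := q ^ r with hQ
    have hQ0 : 0 < Q := pow_pos hq r
    obtain ⟨Q', hQ'⟩ : ∃ Q', Q = Q' + 1 := ⟨Q - 1, by omega⟩
    set β := κ r b0 with hβ
    set φ := κ r (t ^ Q' * s * b0) with hφ
    refine ⟨β * t, φ, mul_ne_zero hb0 ht, ?_⟩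
    have key : ∀ b, κ r (b * (β ^ Q * (t ^ Q' * s) - φ ^ Q)) = 0 := by
      intro b
      by_contra hne
      refine hne ?_
      have h1 : κ r ((t ^ Q' * (β ^ Q * b - (κ r b) ^ Q * b0)) * t) = 0 := by
        have : (t ^ Q' * (β ^ Q * b - (κ r b) ^ Q * b0)) * t
            = t ^ Q * (β ^ Q * b - (κ r b) ^ Q * b0) := by
          rw [hQ']; ring
        rw [this, P1, map_sub, P1, P1]
        rw [← hβ]; ring
      have h2 : κ r ((t ^ Q' * (β ^ Q * b - (κ r b) ^ Q * b0)) * s) = 0 := by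
        by_contra h3
        exact hcon r _ h3 h1
      have h4 : (t ^ Q' * (β ^ Q * b - (κ r b) ^ Q * b0)) * s
          = β ^ Q * (b * (t ^ Q' * s)) - (κ r b) ^ Q * (t ^ Q' * s * b0) := by ring
      rw [h4, map_sub, P1, P1] at h2
      have h5 : b * (β ^ Q * (t ^ Q' * s) - φ ^ Q) = β ^ Q * (b * (t ^ Q' * s)) - φ ^ Q * b := by
        ring
      rw [h5, map_sub, P1, P1, ← h2, ← hφ]
      ring
    have h0 : β ^ Q * (t ^ Q' * s) - φ ^ Q = 0 := by
      by_contra h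
      obtain ⟨g, hg⟩ := P3 r _ h
      exact hg (key g)
    have h6 : φ ^ Q = β ^ Q * (t ^ Q' * s) := by
      rw [sub_eq_zero] at h0; exact h0.symm
    rw [h6, hQ']; ring
  obtain ⟨c, hc⟩ := this
  exact hst c hc

theorem kill_lemma [Infinite A] (κ : ℕ → A →ₗ[K] A) (q : ℕ) (hq : 0 < q)
    (P1 : ∀ r a b, κ r (a ^ (q ^ r) * b) = a * κ r b)
    (P2 : ∀ r r' b, κ r (κ r' b) = κ (r + r') b)
    (P3 : ∀ r b, b ≠ 0 → ∃ g, κ r (g * b) ≠ 0)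
    (hconst : ∀ s t : A, t ≠ 0 →
      (∀ r : ℕ, ∃ α β : A, α ≠ 0 ∧ α ^ (q ^ r) * s = β ^ (q ^ r) * t) → ∃ c : K, s = c • t)
    (l : List A) : ∀ a : A, a ∉ Submodule.span K {x | x ∈ l} →
    ∃ r g, κ r (g * a) ≠ 0 ∧ ∀ b ∈ l, κ r (g * b) = 0 := by
  have comp : ∀ r g r' g' a, κ r (g * κ r' (g' * a)) = κ (r + r') (g ^ (q ^ r') * g' * a) := by
    intro r g r' g' a
    rw [← P1, P2, mul_assoc]
  induction l with
  | nil =>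
    intro a ha
    have : a ≠ 0 := by
      rintro rfl; exact ha (Submodule.zero_mem _)
    obtain ⟨g, hg⟩ := P3 0 a this
    exact ⟨0, g, hg, by simp⟩
  | cons b l ih =>
    intro a ha
    have hset : {x | x ∈ b :: l} = insert b {x | x ∈ l} := by
      ext x; simp
    rw [hset, Submodule.mem_span_insert] at ha
    push Not at ha
    by_contra hcon
    push Not at hcon
    -- every operator killing `l` gives proportional values
    have prop : ∀ r g, (∀ x ∈ l, κ r (g * x) = 0) →
        ∃ c : K, κ r (g * a) = c • κ r (g * b) := by
      intro r g hg
      by_contra hne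
      push Not at hne
      obtain ⟨r', g', h1, h2⟩ := pair_lemma κ q hq P1 P3 hconst _ _ hne
      rw [comp] at h1 h2
      obtain ⟨x, hx, hx'⟩ := hcon _ _ h1
      rw [List.mem_cons] at hx
      rcases hx with rfl | hx
      · exact hx' h2
      · apply hx'
        rw [← comp, hg x hx]; simp
    have ha' : a ∉ Submodule.span K {x | x ∈ l} := by
      intro h
      exact ha 0 a h (by simp)
    obtain ⟨r0, g0, h0a, h0l⟩ := ih a ha'
    obtain ⟨c0, hc0⟩ := prop r0 g0 h0l
    have ha'' : a - c0 • b ∉ Submodule.span K {x | x ∈ l} := by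
      intro h
      exact ha c0 _ h (by simp)
    obtain ⟨r1, g1, h1a, h1l⟩ := ih _ ha''
    have ht0 : κ r0 (g0 * b) ≠ 0 := by
      intro h; rw [h, smul_zero] at hc0; exact h0a hc0
    obtain ⟨k0, hk0⟩ := P3 r1 _ ht0
    obtain ⟨k1, hk1⟩ := P3 r0 _ h1a
    rw [comp] at hk0 hk1
    -- two operators of the same length
    set G0 := k0 ^ (q ^ r0) * g0 with hG0
    set G1 := k1 ^ (q ^ r1) * g1 with hG1
    have hr : r0 + r1 = r1 + r0 := add_comm _ _
    rw [hr] at hk1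
    set r := r1 + r0 with hrdef
    have hl0 : ∀ x ∈ l, κ r (G0 * x) = 0 := by
      intro x hx; rw [hG0, ← comp, h0l x hx]; simp
    have hl1 : ∀ x ∈ l, κ r (G1 * x) = 0 := by
      intro x hx; rw [hG1, ← hr, ← comp, h1l x hx]; simp
    have hGa0 : κ r (G0 * a) = c0 • κ r (G0 * b) := by
      rw [hG0, ← comp, ← comp, hc0, mul_smul_comm, map_smul]
    obtain ⟨c1, hc1⟩ := prop r G1 hl1
    set t0 := κ r (G0 * b) with ht0'
    set t1 := κ r (G1 * b) with ht1'
    have hne : (c1 - c0) • t1 ≠ 0 := by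
      rw [mul_sub, map_sub, mul_smul_comm, map_smul, hc1, ← sub_smul] at hk1
      exact hk1
    have ht1 : t1 ≠ 0 := by
      intro h; rw [h, smul_zero] at hne; exact hne rfl
    have hc : c1 - c0 ≠ 0 := by
      intro h; rw [h, zero_smul] at hne; exact hne rfl
    -- choose a multiplier outside a finite set
    have hfin : Set.Finite {β : A | ∃ c : K, c • t0 = β * t1} := by
      have : {β : A | ∃ c : K, c • t0 = β * t1} =
          ⋃ c : K, {β : A | c • t0 = β * t1} := by
        ext; simp
      rw [this]
      refine Set.finite_iUnion fun c => Set.Subsingleton.finite ?_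
      intro x hx y hy
      simp only [Set.mem_ofPred_eq] at hx hy
      exact mul_right_cancel₀ ht1 (hx.symm.trans hy)
    obtain ⟨β, hβ⟩ := hfin.infinite_compl.nonempty
    simp only [Set.mem_compl_iff, Set.mem_ofPred_eq, not_exists] at hβ
    obtain ⟨c, hcc⟩ := prop r (G0 + β ^ (q ^ r) * G1) (by
      intro x hx
      rw [add_mul, map_add, hl0 x hx, mul_assoc, P1, hl1 x hx]; simp)
    rw [add_mul, add_mul, map_add, map_add, mul_assoc (β ^ (q ^ r)) G1 a,
      mul_assoc (β ^ (q ^ r)) G1 b, P1, P1, hGa0, hc1,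
      ← ht0', ← ht1', smul_add, mul_smul_comm] at hcc
    have h7 : (c0 - c) • t0 = (c - c1) • (β * t1) := by
      rw [sub_smul, sub_smul]
      linear_combination hcc
    by_cases h8 : c - c1 = 0
    · rw [h8, zero_smul, smul_eq_zero] at h7
      rcases h7 with h7 | h7
      · apply hc
        linear_combination -h8 - h7
      · exact hk0 h7
    · apply hβ ((c - c1)⁻¹ * (c0 - c))
      rw [mul_smul, h7, smul_smul, inv_mul_cancel₀ h8, one_smul]

/-- functional nonvanishing at two given nonzero vectors -/
theorem exists_functional (s t : A) (hs : s ≠ 0) (ht : t ≠ 0) :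
    ∃ f : A →ₗ[K] K, f s ≠ 0 ∧ f t ≠ 0 := by
  have ex : ∀ x : A, x ≠ 0 → ∃ f : A →ₗ[K] K, f x ≠ 0 := by
    intro x hx
    by_contra h
    push Not at h
    exact hx ((Module.forall_dual_apply_eq_zero_iff K x).1 h)
  obtain ⟨f, hf⟩ := ex s hs
  obtain ⟨g, hg⟩ := ex t ht
  by_cases h1 : f t = 0
  · by_cases h2 : g s = 0
    · exact ⟨f + g, by simpa [h2] using hf, by simpa [h1] using hg⟩
    · exact ⟨g, h2, hg⟩
  · exact ⟨f, hf, h1⟩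

theorem rank_one_exists [Infinite A] (κ : ℕ → A →ₗ[K] A) (q : ℕ) (hq : 0 < q)
    (P1 : ∀ r a b, κ r (a ^ (q ^ r) * b) = a * κ r b)
    (P2 : ∀ r r' b, κ r (κ r' b) = κ (r + r') b)
    (P3 : ∀ r b, b ≠ 0 → ∃ g, κ r (g * b) ≠ 0)
    (hconst : ∀ s t : A, t ≠ 0 →
      (∀ r : ℕ, ∃ α β : A, α ≠ 0 ∧ α ^ (q ^ r) * s = β ^ (q ^ r) * t) → ∃ c : K, s = c • t)
    (U : Submodule K A) [Module.Finite K U] (Good : ℕ → A → Prop)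
    (G1 : ∀ r g r' g', Good r g → Good r' g' → Good (r + r') (g ^ (q ^ r') * g'))
    (G2 : ∀ r g (c : K), Good r g → Good r (c • g))
    (G3 : ∀ r g a, Good r g → a ∈ U → κ r (g * a) ∈ U)
    (G4 : ∀ l g, ∃ m0, ∀ m ≥ m0, ∀ b ≠ 0, ∃ g', κ m (g' * b) ≠ 0 ∧
      Good (m + l) (g' ^ (q ^ l) * g))
    (w : A) (hw : w ≠ 0) (hU : ∃ u ∈ U, u ≠ 0) :
    ∃ (f : A →ₗ[K] K) (s : A), s ∈ U ∧ f s ≠ 0 ∧ ∃ N0, ∀ N ≥ N0, ∃ g, Good N g ∧ w ∣ g ∧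
      ∀ a ∈ U, κ N (g * a) = f a • s := by
  classical
  have comp : ∀ r g r' g' a, κ r (g * κ r' (g' * a)) = κ (r + r') (g ^ (q ^ r') * g' * a) := by
    intro r g r' g' a
    rw [← P1, P2, mul_assoc]
  have F2 : ∀ f : A →ₗ[K] K, (∃ a ∈ U, f a ≠ 0) → ∃ r0, ∀ r ≥ r0, ∃ g u, Good r g ∧ w ∣ g ∧
      u ≠ 0 ∧ u ∈ U ∧ ∀ a ∈ U, κ r (g * a) = f a • u := by
    rintro f ⟨a, haU, hfa⟩
    have hfg : (U ⊓ LinearMap.ker f).FG := by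
      have : Module.Finite K ↥(U ⊓ LinearMap.ker f) :=
        Submodule.finiteDimensional_of_le (inf_le_left)
      exact (Module.Finite.iff_fg).1 this
    obtain ⟨S, hS⟩ := hfg
    have haS : a ∉ Submodule.span K {x | x ∈ S.toList} := by
      have : {x | x ∈ S.toList} = (S : Set A) := by ext; simp
      rw [this, hS]
      rintro ⟨-, h⟩
      exact hfa h
    obtain ⟨l, g1, h1, h2⟩ := kill_lemma κ q hq P1 P2 P3 hconst S.toList a haS
    have hker : ∀ x ∈ U ⊓ LinearMap.ker f, κ l (g1 * x) = 0 := by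
      intro x hx
      rw [← hS] at hx
      refine Submodule.span_induction (p := fun x _ => κ l (g1 * x) = 0) ?_ ?_ ?_ ?_ hx
      · intro x hx; exact h2 x (by simpa using hx)
      · simp
      · intro x y _ _ hx hy; rw [mul_add, map_add, hx, hy, add_zero]
      · intro c x _ hx; rw [mul_smul_comm, map_smul, hx, smul_zero]
    obtain ⟨m0, hm0⟩ := G4 l (w ^ (q ^ l) * g1)
    refine ⟨m0 + l, fun r hr => ?_⟩
    obtain ⟨m, rfl⟩ : ∃ m, r = m + l := ⟨r - l, by omega⟩
    obtain ⟨g', hg', hgood⟩ := hm0 m (by omega) (w * κ l (g1 * a)) (mul_ne_zero hw h1)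
    have hql : 0 < q ^ l := pow_pos hq l
    have e1 : ∀ x, κ (m + l) (g' ^ (q ^ l) * (w ^ (q ^ l) * g1) * x)
        = κ m (g' * (w * κ l (g1 * x))) := by
      intro x
      rw [← mul_assoc (g' ^ _), ← mul_pow, ← comp, mul_assoc]
    refine ⟨g' ^ (q ^ l) * (w ^ (q ^ l) * g1), (f a)⁻¹ • κ m (g' * (w * κ l (g1 * a))), hgood, ?_,
      ?_, ?_, ?_⟩
    · exact Dvd.dvd.mul_left (Dvd.dvd.mul_right (dvd_pow_self w hql.ne') _) _
    · exact smul_ne_zero (inv_ne_zero hfa) hg'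
    · refine U.smul_mem _ ?_
      rw [← e1]
      exact G3 _ _ _ hgood haU
    · intro x hx
      have hx' : x - (f x * (f a)⁻¹) • a ∈ U ⊓ LinearMap.ker f := by
        refine ⟨U.sub_mem hx (U.smul_mem _ haU), ?_⟩
        simp [hfa]
      have := hker _ hx'
      rw [mul_sub, map_sub, mul_smul_comm, map_smul, sub_eq_zero] at this
      rw [e1, this, mul_smul_comm, mul_smul_comm, map_smul, smul_smul]
  have merge : ∀ X : List A, (∀ x ∈ X, x ∈ U ∧ x ≠ 0) → ∃ m0, ∀ m ≥ m0, ∃ s ∈ U, s ≠ 0 ∧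
      ∀ v ∈ X, ∃ g, Good m g ∧ κ m (g * v) = s := by
    intro X
    induction X with
    | nil =>
      intro _
      obtain ⟨u, hu, hu0⟩ := hU
      exact ⟨0, fun m _ => ⟨u, hu, hu0, by simp⟩⟩
    | cons v' X ih =>
      intro hX
      obtain ⟨m1, hm1⟩ := ih (fun x hx => hX x (List.mem_cons_of_mem _ hx))
      obtain ⟨hvU, hv0⟩ := hX v' List.mem_cons_self
      obtain ⟨f, hf, -⟩ := exists_functional (K := K) v' v' hv0 hv0
      obtain ⟨m2, hm2⟩ := F2 f ⟨v', hvU, hf⟩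
      obtain ⟨s, hsU, hs0, hs⟩ := hm1 (max m1 m2) (le_max_left _ _)
      obtain ⟨g', u', hg', -, hu0, huU, hu⟩ := hm2 (max m1 m2) (le_max_right _ _)
      set k := max m1 m2
      have hs'0 : κ k (g' * v') ≠ 0 := by rw [hu v' hvU]; exact smul_ne_zero hf hu0
      obtain ⟨φ, hφ1, hφ2⟩ := exists_functional (K := K) s (κ k (g' * v')) hs0 hs'0
      obtain ⟨r0, hr0⟩ := F2 φ ⟨s, hsU, hφ1⟩
      refine ⟨r0 + k, fun m hm => ?_⟩
      obtain ⟨r, rfl⟩ : ∃ r, m = r + k := ⟨m - k, by omega⟩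
      obtain ⟨h, u, hh, -, hu0, huU, hhu⟩ := hr0 r (by omega)
      refine ⟨u, huU, hu0, fun v hv => ?_⟩
      have fin : ∀ g, Good k g → κ k (g * v) ∈ U → φ (κ k (g * v)) ≠ 0 →
          ∃ g, Good (r + k) g ∧ κ (r + k) (g * v) = u := by
        intro g hg hgU hgφ
        refine ⟨(((φ (κ k (g * v)))⁻¹ • h) ^ (q ^ k) * g), G1 _ _ _ _ (G2 _ _ _ hh) hg, ?_⟩
        rw [← comp, smul_mul_assoc, map_smul, hhu _ hgU, smul_smul, inv_mul_cancel₀ hgφ, one_smul]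
      rw [List.mem_cons] at hv
      rcases hv with rfl | hv
      · exact fin g' hg' (G3 _ _ _ hg' hvU) hφ2
      · obtain ⟨g, hg, hgs⟩ := hs v hv
        exact fin g hg (by rw [hgs]; exact hsU) (by rw [hgs]; exact hφ1)
  have hfinU : (U : Set A).Finite := by
    have : Finite U := Module.finite_of_finite K
    exact Set.toFinite _
  obtain ⟨m0, hm0⟩ := merge (hfinU.toFinset.filter (· ≠ 0)).toList (by
    intro x hx; simpa using hx)
  obtain ⟨s, hsU, hs0, hs⟩ := hm0 m0 le_rfl
  obtain ⟨f, hf, -⟩ := exists_functional (K := K) s s hs0 hs0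
  obtain ⟨r0, hr0⟩ := F2 f ⟨s, hsU, hf⟩
  refine ⟨f, s, hsU, hf, m0 + r0, fun N hN => ?_⟩
  obtain ⟨r, rfl⟩ : ∃ r, N = m0 + r := ⟨N - m0, by omega⟩
  obtain ⟨g, u, hg, hwg, hu0, huU, hu⟩ := hr0 r (by omega)
  obtain ⟨h, hh, hhs⟩ := hs u (by simpa using ⟨huU, hu0⟩)
  refine ⟨h ^ (q ^ r) * g, G1 _ _ _ _ hh hg, Dvd.dvd.mul_left hwg _, fun a ha => ?_⟩
  rw [← comp, hu a ha, mul_smul_comm, map_smul, hhs]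

end Abstract

section Cartier

variable {σ K : Type} [Fintype σ] [Field K]

/-- the exponent `Q v + (Q - 1)` -/
noncomputable def ctop (Q : ℕ) (v : σ →₀ ℕ) : σ →₀ ℕ :=
  Finsupp.equivFunOnFinite.symm (fun i => Q * v i + (Q - 1))

theorem ctop_apply (Q : ℕ) (v : σ →₀ ℕ) (i : σ) : ctop Q v i = Q * v i + (Q - 1) := rfl

open Classical in
/-- the Cartier operator -/
noncomputable def cart (K : Type) [Field K] (Q : ℕ) :
    MvPolynomial σ K →ₗ[K] MvPolynomial σ K :=
  (MvPolynomial.basisMonomials σ K).constr K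
    (fun m => if ∀ i, m i % Q = Q - 1 then
      MvPolynomial.monomial (Finsupp.equivFunOnFinite.symm fun i => m i / Q) 1 else 0)

theorem eq_ctop_iff (Q : ℕ) (hQ : 0 < Q) (v m : σ →₀ ℕ) :
    m = ctop Q v ↔ (∀ i, m i % Q = Q - 1) ∧
      (Finsupp.equivFunOnFinite.symm fun i => m i / Q) = v := by
  constructor
  · rintro rfl
    refine ⟨fun i => ?_, ?_⟩
    · rw [ctop_apply, Nat.mul_add_mod, Nat.mod_eq_of_lt (by omega)]
    · ext i
      simp only [Finsupp.equivFunOnFinite_symm_apply_apply, ctop_apply]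
      rw [Nat.mul_add_div hQ, Nat.div_eq_of_lt (by omega), add_zero]
  · rintro ⟨h1, rfl⟩
    ext i
    rw [ctop_apply]
    simp only [Finsupp.equivFunOnFinite_symm_apply_apply]
    rw [← h1 i, Nat.div_add_mod]

theorem coeff_cart (Q : ℕ) (hQ : 0 < Q) (G : MvPolynomial σ K) (v : σ →₀ ℕ) :
    MvPolynomial.coeff v (cart K Q G) = MvPolynomial.coeff (ctop Q v) G := by
  classical
  have : (MvPolynomial.lcoeff K v).comp (cart K Q) = MvPolynomial.lcoeff K (ctop Q v) := by
    refine (MvPolynomial.basisMonomials σ K).ext fun m => ?_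
    simp only [LinearMap.comp_apply, cart, Module.Basis.constr_basis]
    simp only [MvPolynomial.coe_basisMonomials, MvPolynomial.lcoeff_apply,
      MvPolynomial.coeff_monomial]
    have := eq_ctop_iff Q hQ v m
    by_cases h1 : ∀ i, m i % Q = Q - 1
    · rw [if_pos h1, MvPolynomial.coeff_monomial]
      by_cases h2 : (Finsupp.equivFunOnFinite.symm fun i => m i / Q) = v
      · rw [if_pos h2, if_pos (this.2 ⟨h1, h2⟩)]
      · rw [if_neg h2, if_neg (fun h => h2 (this.1 h).2)]
    · rw [if_neg h1, if_neg (fun h => h1 (this.1 h).1), MvPolynomial.coeff_zero]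
  exact LinearMap.congr_fun this G

theorem cart_comp (Q Q' : ℕ) (hQ : 0 < Q) (hQ' : 0 < Q') (G : MvPolynomial σ K) :
    cart K Q (cart K Q' G) = cart K (Q * Q') G := by
  ext v
  rw [coeff_cart _ hQ, coeff_cart _ hQ', coeff_cart _ (Nat.mul_pos hQ hQ')]
  congr 1
  ext i
  rw [ctop_apply, ctop_apply, ctop_apply]
  obtain ⟨a, rfl⟩ : ∃ a, Q = a + 1 := ⟨Q - 1, by omega⟩
  obtain ⟨b, rfl⟩ : ∃ b, Q' = b + 1 := ⟨Q' - 1, by omega⟩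
  have : (a + 1) * (b + 1) - 1 = a * b + a + b := by
    have : (a + 1) * (b + 1) = a * b + a + b + 1 := by ring
    omega
  rw [this]
  simp only [Nat.add_sub_cancel]
  ring

theorem cart_frob (p j : ℕ) [Fact p.Prime] [CharP K p] (hK : ∀ c : K, c ^ (p ^ j) = c)
    (f g : MvPolynomial σ K) : cart K (p ^ j) (f ^ (p ^ j) * g) = f * cart K (p ^ j) g := by
  have hQ : 0 < p ^ j := pow_pos (Fact.out : p.Prime).pos j
  set Q := p ^ j with hQdef
  induction f using MvPolynomial.induction_on' with
  | add f f' h1 h2 =>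
    rw [hQdef, add_pow_expChar_pow, ← hQdef, add_mul, map_add, add_mul, h1, h2]
  | monomial a b =>
    rw [MvPolynomial.monomial_pow, hK]
    ext v
    rw [coeff_cart _ hQ, MvPolynomial.coeff_monomial_mul', MvPolynomial.coeff_monomial_mul',
      coeff_cart _ hQ]
    have hle : Q • a ≤ ctop Q v ↔ a ≤ v := by
      rw [Finsupp.le_def, Finsupp.le_def]
      refine forall_congr' fun i => ?_
      rw [ctop_apply, Finsupp.smul_apply, smul_eq_mul]
      constructor
      · intro h
        by_contra h'
        have : Q * (v i + 1) ≤ Q * a i := Nat.mul_le_mul_left _ (by omega)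
        rw [mul_add] at this
        omega
      · intro h
        have : Q * a i ≤ Q * v i := Nat.mul_le_mul_left _ h
        omega
    by_cases h : a ≤ v
    · rw [if_pos h, if_pos (hle.2 h)]
      congr 2
      ext i
      rw [Finsupp.tsub_apply, ctop_apply, ctop_apply, Finsupp.tsub_apply, Finsupp.smul_apply,
        smul_eq_mul, Nat.mul_sub]
      have : Q * a i ≤ Q * v i := Nat.mul_le_mul_left _ (h i)
      omega
    · rw [if_neg h, if_neg (fun h' => h (hle.1 h'))]

theorem degree_ctop (Q : ℕ) (v : σ →₀ ℕ) :
    (ctop Q v).degree = Q * v.degree + Fintype.card σ * (Q - 1) := by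
  rw [Finsupp.degree_eq_sum, Finsupp.degree_eq_sum]
  simp only [ctop_apply]
  rw [Finset.sum_add_distrib, ← Finset.mul_sum]
  simp

theorem tdeg_le_iff (G : MvPolynomial σ K) (d : ℕ) :
    G.totalDegree ≤ d ↔ ∀ v, MvPolynomial.coeff v G ≠ 0 → v.degree ≤ d := by
  rw [MvPolynomial.totalDegree, Finset.sup_le_iff]
  refine forall_congr' fun v => ?_
  rw [MvPolynomial.mem_support_iff]
  rfl

theorem coeff_eq_zero_of_tdeg (G : MvPolynomial σ K) (v : σ →₀ ℕ) (h : G.totalDegree < v.degree) :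
    MvPolynomial.coeff v G = 0 := by
  by_contra hne
  exact absurd ((tdeg_le_iff G _).1 le_rfl v hne) (by omega)

theorem cart_degree (Q : ℕ) (hQ : 0 < Q) (G : MvPolynomial σ K) (d : ℕ)
    (h : G.totalDegree < Q * (d + 1) + Fintype.card σ * (Q - 1)) :
    (cart K Q G).totalDegree ≤ d := by
  rw [tdeg_le_iff]
  intro v hv
  rw [coeff_cart _ hQ] at hv
  have h1 := (tdeg_le_iff G _).1 le_rfl _ hv
  rw [degree_ctop] at h1
  have h2 : Q * v.degree < Q * (d + 1) := by omega
  have := Nat.lt_of_mul_lt_mul_left h2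
  omega

theorem cart_monomial (Q : ℕ) (hQ : 0 < Q) (m : σ →₀ ℕ) (c : K) (hm : ∀ i, m i % Q = Q - 1) :
    cart K Q (MvPolynomial.monomial m c) =
      MvPolynomial.monomial (Finsupp.equivFunOnFinite.symm fun i => m i / Q) c := by
  classical
  ext v
  rw [coeff_cart _ hQ, MvPolynomial.coeff_monomial, MvPolynomial.coeff_monomial]
  have := eq_ctop_iff Q hQ v m
  simp only [this, hm, implies_true, true_and]

theorem cart_monomial_zero (Q : ℕ) (hQ : 0 < Q) (m : σ →₀ ℕ) (c : K) (i : σ)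
    (hm : m i % Q ≠ Q - 1) : cart K Q (MvPolynomial.monomial m c) = 0 := by
  classical
  ext v
  rw [coeff_cart _ hQ, MvPolynomial.coeff_monomial, MvPolynomial.coeff_zero, if_neg]
  intro h
  exact hm (((eq_ctop_iff Q hQ v m).1 h).1 i)

/-- reconstruction -/
theorem cart_recon [DecidableEq σ] (p j : ℕ) [Fact p.Prime] [CharP K p]
    (hK : ∀ c : K, c ^ (p ^ j) = c) (G : MvPolynomial σ K) :
    G = ∑ u : σ → Fin (p ^ j), MvPolynomial.monomial
      (Finsupp.equivFunOnFinite.symm fun i => (u i : ℕ)) 1 *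
      (cart K (p ^ j) (MvPolynomial.monomial
        (Finsupp.equivFunOnFinite.symm fun i => p ^ j - 1 - (u i : ℕ)) 1 * G)) ^ (p ^ j) := by
  have hQ : 0 < p ^ j := pow_pos (Fact.out : p.Prime).pos j
  induction G using MvPolynomial.induction_on' with
  | add f g h1 h2 =>
    conv_lhs => rw [h1, h2]
    rw [← Finset.sum_add_distrib]
    refine Finset.sum_congr rfl fun u _ => ?_
    rw [mul_add, map_add, add_pow_expChar_pow, mul_add]
  | monomial m c =>
    set Q := p ^ j with hQdef
    rw [Finset.sum_eq_single (fun i => (⟨m i % Q, Nat.mod_lt _ hQ⟩ : Fin Q))]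
    · rw [MvPolynomial.monomial_mul, one_mul, cart_monomial _ hQ, MvPolynomial.monomial_pow, hK,
        MvPolynomial.monomial_mul, one_mul]
      · congr 2
        ext i
        simp only [Finsupp.add_apply, Finsupp.equivFunOnFinite_symm_apply_apply, Finsupp.smul_apply,
          smul_eq_mul]
        have h1 := Nat.mod_lt (m i) hQ
        have h2 := Nat.div_add_mod (m i) Q
        have h3 : Q - 1 - m i % Q + m i = Q * (m i / Q) + (Q - 1) := by omega
        rw [h3, Nat.mul_add_div hQ, Nat.div_eq_of_lt (by omega : Q - 1 < Q), add_zero]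
        omega
      · intro i
        simp only [Finsupp.add_apply, Finsupp.equivFunOnFinite_symm_apply_apply]
        have h1 := Nat.mod_lt (m i) hQ
        have h2 := Nat.div_add_mod (m i) Q
        have h3 : Q - 1 - m i % Q + m i = Q * (m i / Q) + (Q - 1) := by omega
        rw [h3, Nat.mul_add_mod, Nat.mod_eq_of_lt (by omega)]
    · intro u _ hu
      obtain ⟨i, hi⟩ : ∃ i, (u i : ℕ) ≠ m i % Q := by
        by_contra hcon
        push Not at hcon
        exact hu (funext fun i => Fin.ext (hcon i))
      rw [MvPolynomial.monomial_mul, one_mul, cart_monomial_zero _ hQ _ _ i, zero_pow hQ.ne',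
        mul_zero]
      simp only [Finsupp.add_apply, Finsupp.equivFunOnFinite_symm_apply_apply]
      intro h
      apply hi
      have hu := (u i).2
      have h1 := Nat.mod_lt (m i) hQ
      have h2 := Nat.div_add_mod (m i) Q
      have h4 : Q - 1 - (u i : ℕ) + m i = Q * (m i / Q) + (Q - 1 - (u i : ℕ) + m i % Q) := by
        omega
      rw [h4, Nat.mul_add_mod] at h
      rcases Nat.lt_or_ge (Q - 1 - (u i : ℕ) + m i % Q) Q with h5 | h5
      · rw [Nat.mod_eq_of_lt h5] at h
        omega
      · rw [Nat.mod_eq_sub_mod h5, Nat.mod_eq_of_lt (by omega)] at h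
        omega
    · intro h
      exact absurd (Finset.mem_univ _) h

/-- separation: if `E` does not divide `s`, some twisted Cartier image is not divisible by `E` -/
theorem cart_sep (p j : ℕ) [Fact p.Prime] [CharP K p]
    (hK : ∀ c : K, c ^ (p ^ j) = c) (E s : MvPolynomial σ K) (hE : E ≠ 0) (hs : ¬ E ∣ s) :
    ∃ u : σ →₀ ℕ, u.degree ≤ Fintype.card σ * (p ^ j - 1) ∧
      ¬ E ∣ cart K (p ^ j) (E ^ (p ^ j - 1) * (MvPolynomial.monomial u 1 * s)) := by
  classical
  have hQ : 0 < p ^ j := pow_pos (Fact.out : p.Prime).pos j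
  by_contra hcon
  push Not at hcon
  apply hs
  have h1 : E ^ (p ^ j) ∣ E ^ (p ^ j - 1) * s := by
    rw [cart_recon p j hK (E ^ (p ^ j - 1) * s)]
    refine Finset.dvd_sum fun u _ => Dvd.dvd.mul_left (pow_dvd_pow_of_dvd ?_ _) _
    rw [mul_left_comm]
    refine hcon _ ?_
    rw [Finsupp.degree_eq_sum]
    simp only [Finsupp.equivFunOnFinite_symm_apply_apply]
    calc ∑ i, (p ^ j - 1 - (u i : ℕ)) ≤ ∑ _i : σ, (p ^ j - 1) :=
          Finset.sum_le_sum fun i _ => Nat.sub_le _ _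
      _ = _ := by simp
  have h2 : E ^ (p ^ j) = E ^ (p ^ j - 1) * E := by
    rw [← pow_succ, Nat.sub_add_cancel hQ]
  rw [h2] at h1
  exact (mul_dvd_mul_iff_left (pow_ne_zero _ hE)).1 h1

end Cartier

section PointSum

variable {σ K : Type} [Fintype σ] [Field K]

/-- exponents of bounded degree -/
noncomputable def degS (σ : Type) [Fintype σ] (d : ℕ) : Finset (σ →₀ ℕ) :=
  (Finsupp.finite_of_degree_le (σ := σ) d).toFinset

theorem mem_degS (d : ℕ) (v : σ →₀ ℕ) : v ∈ degS σ d ↔ v.degree ≤ d := by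
  simp [degS]

/-- the exponent `(Q-1)(v+1)` -/
noncomputable def phiE (Q : ℕ) (v : σ →₀ ℕ) : σ →₀ ℕ :=
  Finsupp.equivFunOnFinite.symm (fun i => (Q - 1) * (v i + 1))

theorem phiE_apply (Q : ℕ) (v : σ →₀ ℕ) (i : σ) : phiE Q v i = (Q - 1) * (v i + 1) := rfl

theorem degree_phiE (Q : ℕ) (v : σ →₀ ℕ) :
    (phiE Q v).degree = (Q - 1) * (v.degree + Fintype.card σ) := by
  rw [Finsupp.degree_eq_sum, Finsupp.degree_eq_sum]
  simp only [phiE_apply]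
  rw [← Finset.mul_sum, Finset.sum_add_distrib]
  simp

theorem ctop_eq_phiE (Q : ℕ) (hQ : 0 < Q) (v : σ →₀ ℕ) : ctop Q v = phiE Q v + v := by
  ext i
  rw [Finsupp.add_apply, ctop_apply, phiE_apply]
  obtain ⟨a, rfl⟩ : ∃ a, Q = a + 1 := ⟨Q - 1, by omega⟩
  simp only [Nat.add_sub_cancel]
  ring

theorem sum_pow_field (L : Type) [Field L] [Fintype L] (i : ℕ) (hi : i ≠ 0) :
    (∑ x : L, x ^ i) = if Fintype.card L - 1 ∣ i then -1 else 0 := by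
  classical
  rw [← FiniteField.sum_pow_units L i]
  symm
  calc ∑ x : Lˣ, (x ^ i : L) = ∑ x : {x : L // x ≠ 0}, (x : L) ^ i :=
        Fintype.sum_equiv unitsEquivNeZero _ _ (fun x => rfl)
    _ = ∑ x ∈ Finset.univ.filter (fun x : L => x ≠ 0), x ^ i := by
        rw [← Finset.sum_subtype (p := fun x : L => x ≠ 0)
          (Finset.univ.filter (fun x : L => x ≠ 0)) (by simp) (fun x => x ^ i)]
    _ = ∑ x : L, x ^ i := by
        rw [Finset.sum_filter_of_ne]
        intro x _ h hx
        rw [hx, zero_pow hi] at h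
        exact h rfl

theorem sum_points [DecidableEq σ] (L : Type) [Field L] [Fintype L] [Algebra K L] (G : MvPolynomial σ K)
    (d : ℕ) (hdeg : G.totalDegree < (Fintype.card L - 1) * (d + 1 + Fintype.card σ)) :
    ∑ z : σ → L, MvPolynomial.aeval z G =
      algebraMap K L ((-1) ^ (Fintype.card σ) *
        ∑ v ∈ degS σ d, MvPolynomial.coeff (phiE (Fintype.card L) v) G) := by
  classical
  set Q := Fintype.card L with hQ
  have hQ1 : 1 < Q := Fintype.one_lt_card
  have hinj : Function.Injective (phiE Q : (σ →₀ ℕ) → (σ →₀ ℕ)) := by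
    intro v v' h
    ext i
    have := DFunLike.congr_fun h i
    rw [phiE_apply, phiE_apply] at this
    have := Nat.eq_of_mul_eq_mul_left (by omega) this
    omega
  have h1 : ∑ z : σ → L, MvPolynomial.aeval z G =
      ∑ m ∈ G.support, algebraMap K L (MvPolynomial.coeff m G) * ∏ i, ∑ t : L, t ^ m i := by
    simp only [MvPolynomial.aeval_def, MvPolynomial.eval₂_eq']
    rw [Finset.sum_comm]
    refine Finset.sum_congr rfl fun m _ => ?_
    rw [← Finset.mul_sum, Finset.prod_univ_sum]
    simp
  have hc1 : ∀ v : σ →₀ ℕ, ∏ i, ∑ t : L, t ^ (phiE Q v i) = (-1) ^ (Fintype.card σ) := by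
    intro v
    have : ∀ i, ∑ t : L, t ^ (phiE Q v i) = -1 := by
      intro i
      rw [sum_pow_field, if_pos]
      · rw [phiE_apply]; exact Dvd.intro _ rfl
      · rw [phiE_apply]; exact Nat.mul_ne_zero (by omega) (by omega)
    simp [this]
  have hc0 : ∀ m : σ →₀ ℕ, (∀ v, m ≠ phiE Q v) → ∏ i, ∑ t : L, t ^ (m i) = 0 := by
    intro m hm
    by_contra hne
    rw [← ne_eq, Finset.prod_ne_zero_iff] at hne
    have h2 : ∀ i, ∃ c, m i = (Q - 1) * (c + 1) := by
      intro i
      have h3 := hne i (Finset.mem_univ i)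
      by_cases h4 : m i = 0
      · rw [h4] at h3
        simp at h3
      · rw [sum_pow_field _ _ h4] at h3
        by_cases h5 : Q - 1 ∣ m i
        · obtain ⟨c, hc⟩ := h5
          refine ⟨c - 1, ?_⟩
          have : c ≠ 0 := by rintro rfl; exact h4 (by simpa using hc)
          rw [hc, Nat.sub_add_cancel (by omega)]
        · rw [if_neg h5] at h3; exact absurd rfl h3
    choose c hc using h2
    refine hm (Finsupp.equivFunOnFinite.symm c) ?_
    ext i
    rw [phiE_apply, hc]
    rfl
  have h2 : algebraMap K L ((-1) ^ (Fintype.card σ) *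
        ∑ v ∈ degS σ d, MvPolynomial.coeff (phiE Q v) G) = ∑ v ∈ degS σ d,
        algebraMap K L (MvPolynomial.coeff (phiE Q v) G) * ∏ i, ∑ t : L, t ^ (phiE Q v i) := by
    rw [map_mul, map_sum, Finset.mul_sum]
    refine Finset.sum_congr rfl fun v _ => ?_
    rw [hc1, mul_comm]
    simp
  rw [h1, h2]
  rw [← Finset.sum_image (s := degS σ d) (g := phiE Q)
    (f := fun m => algebraMap K L (MvPolynomial.coeff m G) * ∏ i, ∑ t : L, t ^ (m i))
    (fun _ _ _ _ h => hinj h)]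
  rw [Finset.sum_subset (Finset.subset_union_left (s₁ := G.support)
    (s₂ := (degS σ d).image (phiE Q)))]
  swap
  · intro m _ hm
    rw [MvPolynomial.notMem_support_iff] at hm
    rw [hm]; simp
  symm
  rw [Finset.sum_subset (Finset.subset_union_right (s₁ := G.support)
    (s₂ := (degS σ d).image (phiE Q)))]
  intro m _ hm
  by_cases h3 : ∃ v, m = phiE Q v
  · obtain ⟨v, rfl⟩ := h3
    have h4 : ¬ v.degree ≤ d := fun h =>
      hm (Finset.mem_image_of_mem _ ((mem_degS d v).2 h))
    rw [coeff_eq_zero_of_tdeg, map_zero, zero_mul]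
    rw [degree_phiE]
    refine lt_of_lt_of_le hdeg (Nat.mul_le_mul_left _ (by omega))
  · push Not at h3
    rw [hc0 m h3, mul_zero]

/-- a linear functional evaluated on a polynomial of bounded degree -/
theorem sum_functional (d : ℕ) (P : MvPolynomial σ K) (hP : P.totalDegree ≤ d)
    (φ : MvPolynomial σ K →ₗ[K] K) :
    ∑ v ∈ degS σ d, φ (MvPolynomial.monomial v 1) * MvPolynomial.coeff v P = φ P := by
  have h1 : P = ∑ v ∈ degS σ d, MvPolynomial.coeff v P • MvPolynomial.monomial v (1 : K) := by
    conv_lhs => rw [MvPolynomial.as_sum P]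
    rw [Finset.sum_subset (s₂ := degS σ d)]
    · refine Finset.sum_congr rfl fun v _ => ?_
      rw [MvPolynomial.smul_monomial, smul_eq_mul, mul_one]
    · intro v hv
      rw [MvPolynomial.mem_support_iff] at hv
      exact (mem_degS d v).2 ((tdeg_le_iff P d).1 hP v hv)
    · intro v _ hv
      rw [MvPolynomial.notMem_support_iff] at hv
      rw [hv, MvPolynomial.monomial_zero]
  conv_rhs => rw [h1]
  rw [map_sum]
  refine Finset.sum_congr rfl fun v _ => ?_
  rw [map_smul, smul_eq_mul, mul_comm]

/-- the trace computation -/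
theorem trace_contra (p j : ℕ) [Fact p.Prime] [CharP K p]
    (hK : ∀ c : K, c ^ (p ^ j) = c) (L : Type) [Field L] [Fintype L] [Algebra K L]
    (hL : Fintype.card L = p ^ j) (E g s : MvPolynomial σ K) (d : ℕ) (hE : E ≠ 0)
    (hd : E.totalDegree = d) (hs : s.totalDegree ≤ d)
    (hg : g.totalDegree < (Fintype.card σ + 1) * (p ^ j - 1))
    (lam : MvPolynomial σ K →ₗ[K] K) (hlamE : lam E = 0)
    (hT : ∀ a : MvPolynomial σ K, a.totalDegree ≤ d →
      E ∣ cart K (p ^ j) (E ^ (p ^ j - 1) * (g * a)) - lam a • s)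
    (hz : ∀ z : σ → L, MvPolynomial.aeval z E = 0 → MvPolynomial.aeval z g = 0) :
    lam s = 0 := by
  classical
  set Q := p ^ j with hQdef
  have hQ1 : 1 < Q := by rw [← hL]; exact Fintype.one_lt_card
  have hQ : 0 < Q := by omega
  set n := Fintype.card σ with hn
  have hEpow : (E ^ (Q - 1)).totalDegree ≤ (Q - 1) * d := by
    rw [← hd]; exact MvPolynomial.totalDegree_pow _ _
  have hEg : (E ^ (Q - 1) * g).totalDegree < (Q - 1) * (d + 1 + n) := by
    refine lt_of_le_of_lt (MvPolynomial.totalDegree_mul _ _) ?_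
    have : (Q - 1) * (d + 1 + n) = (Q - 1) * d + (n + 1) * (Q - 1) := by ring
    omega
  have hQQ : (Q - 1) * d + d = Q * d := by
    obtain ⟨a, ha⟩ : ∃ a, Q = a + 1 := ⟨Q - 1, by omega⟩
    rw [ha, Nat.add_sub_cancel]; ring
  have hnQ : (n + 1) * (Q - 1) = n * (Q - 1) + (Q - 1) := by ring
  obtain ⟨v0, hv0⟩ := MvPolynomial.ne_zero_iff.1 hE
  set c0 := MvPolynomial.coeff v0 E with hc0
  set T : MvPolynomial σ K →ₗ[K] MvPolynomial σ K :=
    (cart K Q).comp (LinearMap.mulLeft K (E ^ (Q - 1) * g)) with hTdef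
  have hTapp : ∀ a, T a = cart K Q (E ^ (Q - 1) * (g * a)) := by
    intro a; simp [hTdef, mul_assoc]
  set rho : MvPolynomial σ K →ₗ[K] K :=
    c0⁻¹ • (MvPolynomial.lcoeff K v0).comp (T - lam.smulRight s) with hrho
  have hrhoapp : ∀ a, rho a = c0⁻¹ * MvPolynomial.coeff v0 (T a - lam a • s) := by
    intro a; simp [hrho]
  have hdec : ∀ a : MvPolynomial σ K, a.totalDegree ≤ d → T a = lam a • s + rho a • E := by
    intro a ha
    have h1 := hT a ha
    rw [← hTapp] at h1
    obtain ⟨b, hb⟩ := h1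
    have hTd : (T a).totalDegree ≤ d := by
      rw [hTapp, ← mul_assoc]
      refine cart_degree Q hQ _ d ?_
      refine lt_of_le_of_lt (MvPolynomial.totalDegree_mul _ _) ?_
      have : (Q - 1) * (d + 1 + n) + d = Q * d + n * (Q - 1) + (Q - 1) := by
        rw [← hQQ]; ring
      rw [← hn, mul_add]
      omega
    have hbc : ∃ c, b = MvPolynomial.C c := by
      by_cases hb0 : b = 0
      · exact ⟨0, by simp [hb0]⟩
      have h2 : (E * b).totalDegree ≤ d := by
        rw [← hb]
        refine (MvPolynomial.totalDegree_sub _ _).trans (max_le hTd ?_)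
        exact (MvPolynomial.totalDegree_smul_le _ _).trans hs
      rw [MvPolynomial.totalDegree_mul_of_isDomain hE hb0] at h2
      exact ⟨_, MvPolynomial.totalDegree_eq_zero_iff_eq_C.1 (by omega)⟩
    obtain ⟨c, rfl⟩ := hbc
    have h3 : rho a = c := by
      rw [hrhoapp, hb, mul_comm E, MvPolynomial.coeff_C_mul, mul_comm c, ← mul_assoc,
        inv_mul_cancel₀ hv0, one_mul]
    rw [h3, MvPolynomial.smul_eq_C_mul E, mul_comm, ← hb]
    ring
  -- trace
  have htr : ∑ v ∈ degS σ d, MvPolynomial.coeff v (T (MvPolynomial.monomial v 1)) =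
      lam s + rho E := by
    rw [← sum_functional d s hs lam, ← sum_functional d E hd.le rho, ← Finset.sum_add_distrib]
    refine Finset.sum_congr rfl fun v hv => ?_
    rw [hdec]
    · simp
    · rw [MvPolynomial.totalDegree_monomial _ one_ne_zero]
      exact (mem_degS d v).1 hv
  have hrE : rho E = MvPolynomial.coeff (phiE Q 0) g := by
    have h1 : T E = E * cart K Q g := by
      have h2 : E ^ (Q - 1) * (g * E) = E ^ Q * g := by
        have : E ^ Q = E ^ (Q - 1) * E := by rw [← pow_succ, Nat.sub_add_cancel hQ]
        rw [this]; ring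
      rw [hTapp, h2, hQdef, cart_frob p j hK]
    have h3 : (cart K Q g).totalDegree ≤ 0 := by
      refine cart_degree Q hQ _ 0 ?_
      rw [← hn]; omega
    have h4 := MvPolynomial.totalDegree_eq_zero_iff_eq_C.1 (Nat.le_zero.1 h3)
    rw [coeff_cart _ hQ, ctop_eq_phiE Q hQ, add_zero] at h4
    rw [hrhoapp, hlamE, zero_smul, sub_zero, h1, h4, mul_comm E, MvPolynomial.coeff_C_mul,
      mul_comm _ (MvPolynomial.coeff v0 E), ← mul_assoc, inv_mul_cancel₀ hv0, one_mul]
  have hco : ∀ v, MvPolynomial.coeff v (T (MvPolynomial.monomial v 1)) =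
      MvPolynomial.coeff (phiE Q v) (E ^ (Q - 1) * g) := by
    intro v
    rw [hTapp, coeff_cart _ hQ, ctop_eq_phiE Q hQ, ← mul_assoc, MvPolynomial.coeff_mul_monomial,
      mul_one]
  have hpt : ∑ z : σ → L, MvPolynomial.aeval z (E ^ (Q - 1) * g) =
      ∑ z : σ → L, MvPolynomial.aeval z g := by
    refine Finset.sum_congr rfl fun z _ => ?_
    rw [map_mul, map_pow]
    by_cases h : MvPolynomial.aeval z E = 0
    · rw [hz z h, mul_zero]
    · rw [← hL, FiniteField.pow_card_sub_one_eq_one _ h, one_mul]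
  rw [sum_points L _ d (by rw [hL]; exact hEg), sum_points L g 0 (by
    rw [hL]; refine lt_of_lt_of_eq hg ?_; ring)] at hpt
  have h0 : degS σ 0 = {0} := by
    ext v
    rw [mem_degS, Finset.mem_singleton, Nat.le_zero, Finsupp.degree_eq_zero_iff]
  have h5 := (algebraMap K L).injective hpt
  rw [h0, Finset.sum_singleton, hL] at h5
  have h6 := mul_left_cancel₀ (pow_ne_zero _ (neg_ne_zero.2 one_ne_zero)) h5
  rw [Finset.sum_congr rfl (fun v _ => hco v), h6, hrE] at htr
  linear_combination -htr

end PointSum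

section TheoremA

variable {σ K : Type} [Fintype σ] [Field K] [Fintype K]

theorem kappa_exists (p n : ℕ) [Fact p.Prime] [CharP K p] (hcard : Fintype.card K = p ^ n)
    (E : MvPolynomial σ K) (r : ℕ) :
    ∃ κ : (MvPolynomial σ K ⧸ Ideal.span {E}) →ₗ[K] (MvPolynomial σ K ⧸ Ideal.span {E}),
      ∀ g, κ (Ideal.Quotient.mk _ g) =
        Ideal.Quotient.mk _ (cart K ((p ^ n) ^ r) (E ^ ((p ^ n) ^ r - 1) * g)) := by
  have hK : ∀ c : K, c ^ (p ^ (n * r)) = c := by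
    intro c; rw [pow_mul, ← hcard, FiniteField.pow_card_pow]
  have hfr := cart_frob (σ := σ) p (n * r) hK
  rw [pow_mul] at hfr
  set Q := (p ^ n) ^ r with hQ
  have hQ0 : 0 < Q := pow_pos (pow_pos (Fact.out : p.Prime).pos n) r
  set mk := Ideal.Quotient.mk (Ideal.span {E}) with hmk
  have hwell : ∀ g g', mk g = mk g' →
      mk (cart K Q (E ^ (Q - 1) * g)) = mk (cart K Q (E ^ (Q - 1) * g')) := by
    intro g g' h
    rw [hmk, Ideal.Quotient.eq, Ideal.mem_span_singleton] at h ⊢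
    obtain ⟨c, hc⟩ := h
    refine ⟨cart K Q c, ?_⟩
    rw [← map_sub, ← mul_sub, hc, ← hfr]
    congr 1
    rw [← mul_assoc, ← pow_succ, Nat.sub_add_cancel hQ0]
  have hsurj : Function.Surjective mk := Ideal.Quotient.mk_surjective
  set F : (MvPolynomial σ K ⧸ Ideal.span {E}) → (MvPolynomial σ K ⧸ Ideal.span {E}) :=
    fun a => mk (cart K Q (E ^ (Q - 1) * Function.surjInv hsurj a)) with hF
  have key : ∀ g, F (mk g) = mk (cart K Q (E ^ (Q - 1) * g)) := by
    intro g
    exact hwell _ _ (Function.surjInv_eq hsurj _)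
  refine ⟨{ toFun := F, map_add' := ?_, map_smul' := ?_ }, key⟩
  · intro a b
    obtain ⟨a, rfl⟩ := hsurj a
    obtain ⟨b, rfl⟩ := hsurj b
    rw [← map_add, key, key, key, mul_add, map_add, map_add]
  · intro c a
    obtain ⟨a, rfl⟩ := hsurj a
    have hsm : ∀ x : MvPolynomial σ K, c • mk x = mk (c • x) := fun x => rfl
    rw [RingHom.id_apply, hsm, key, key, hsm, mul_smul_comm, map_smul]

theorem point_exists (p n : ℕ) [Fact p.Prime] [CharP K p] (hcard : Fintype.card K = p ^ n)
    (E w : MvPolynomial σ K) (hE : Prime E) (hw : ¬ E ∣ w)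
    (hinf : Infinite (MvPolynomial σ K ⧸ Ideal.span {E}))
    (hconst : ∀ s t : MvPolynomial σ K ⧸ Ideal.span {E}, t ≠ 0 →
      (∀ r : ℕ, ∃ α β : MvPolynomial σ K ⧸ Ideal.span {E},
        α ≠ 0 ∧ α ^ ((p ^ n) ^ r) * s = β ^ ((p ^ n) ^ r) * t) → ∃ c : K, s = c • t) :
    ∃ r0, ∀ r ≥ r0, ∀ (L : Type) [Field L] [Fintype L] [Algebra K L],
      Fintype.card L = Fintype.card K ^ r →
      ∃ z : σ → L, MvPolynomial.aeval z E = 0 ∧ MvPolynomial.aeval z w ≠ 0 := by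
  have hprime : (Ideal.span {E}).IsPrime := (Ideal.span_singleton_prime hE.ne_zero).2 hE
  have hK : ∀ r, ∀ c : K, c ^ (p ^ (n * r)) = c := by
    intro r c; rw [pow_mul, ← hcard, FiniteField.pow_card_pow]
  have hfr : ∀ r, ∀ f g : MvPolynomial σ K, cart K ((p ^ n) ^ r) (f ^ ((p ^ n) ^ r) * g) =
      f * cart K ((p ^ n) ^ r) g := by
    intro r
    have := cart_frob (σ := σ) p (n * r) (hK r)
    rwa [pow_mul] at this
  have hsep : ∀ r, ∀ s, ¬ E ∣ s → ∃ u : σ →₀ ℕ, u.degree ≤ Fintype.card σ * ((p ^ n) ^ r - 1) ∧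
      ¬ E ∣ cart K ((p ^ n) ^ r) (E ^ ((p ^ n) ^ r - 1) * (MvPolynomial.monomial u 1 * s)) := by
    intro r s hs
    have := cart_sep p (n * r) (hK r) E s hE.ne_zero hs
    rwa [pow_mul] at this
  choose κ hκ using kappa_exists (σ := σ) (K := K) p n hcard E
  set q := p ^ n with hq
  have hq1 : 1 < q := by rw [← hcard]; exact Fintype.one_lt_card
  have hQ0 : ∀ r, 0 < q ^ r := fun r => pow_pos (by omega) r
  set A := MvPolynomial σ K ⧸ Ideal.span {E} with hA
  set mk := Ideal.Quotient.mk (Ideal.span {E}) with hmk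
  have hsurj : Function.Surjective mk := Ideal.Quotient.mk_surjective
  have hmk0 : ∀ x, mk x = 0 ↔ E ∣ x := by
    intro x
    rw [hmk, Ideal.Quotient.eq_zero_iff_mem, Ideal.mem_span_singleton]
  have hsm : ∀ (c : K) (x : MvPolynomial σ K), c • mk x = mk (c • x) := fun c x => rfl
  set ns := Fintype.card σ with hns
  set d := E.totalDegree with hd
  set U : Submodule K A := (MvPolynomial.restrictTotalDegree σ K d).map
    (Ideal.Quotient.mkₐ K (Ideal.span {E})).toLinearMap with hU
  have memU : ∀ a, a ∈ U ↔ ∃ x : MvPolynomial σ K, x.totalDegree ≤ d ∧ mk x = a := by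
    intro a
    rw [hU, Submodule.mem_map]
    simp only [MvPolynomial.mem_restrictTotalDegree]
    rfl
  have hdegT : ∀ r (g a : MvPolynomial σ K), g.totalDegree < (ns + 1) * (q ^ r - 1) →
      a.totalDegree ≤ d →
      (cart K (q ^ r) (E ^ (q ^ r - 1) * (g * a))).totalDegree ≤ d := by
    intro r g a hg ha
    have hQ := hQ0 r
    set Q := q ^ r
    refine cart_degree Q hQ _ d ?_
    have h1 := MvPolynomial.totalDegree_mul (E ^ (Q - 1)) (g * a)
    have h2 := MvPolynomial.totalDegree_mul g a
    have h3 := MvPolynomial.totalDegree_pow E (Q - 1)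
    rw [← hd] at h3
    have hQQ : (Q - 1) * d + d = Q * d := by
      obtain ⟨a, ha⟩ : ∃ a, Q = a + 1 := ⟨Q - 1, by omega⟩
      rw [ha, Nat.add_sub_cancel]; ring
    have hnQ : (ns + 1) * (Q - 1) = ns * (Q - 1) + (Q - 1) := by ring
    rw [← hns, mul_add]
    omega
  have hmain := rank_one_exists κ q (by omega) ?P1 ?P2 ?P3 hconst U
    (fun r a => ∃ g : MvPolynomial σ K, mk g = a ∧ g.totalDegree < (ns + 1) * (q ^ r - 1))
    ?G1 ?G2 ?G3 ?G4 (mk w) ?hw ?hU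
  case P1 =>
    intro r a b
    obtain ⟨a, rfl⟩ := hsurj a
    obtain ⟨b, rfl⟩ := hsurj b
    rw [← map_pow, ← map_mul, hκ, hκ, ← map_mul, ← hfr]
    congr 2
    ring
  case P2 =>
    intro r r' b
    obtain ⟨b, rfl⟩ := hsurj b
    rw [hκ, hκ, hκ, ← hfr, cart_comp _ _ (hQ0 r) (hQ0 r'), ← pow_add, ← mul_assoc,
      ← pow_mul E, ← pow_add E]
    congr 4
    have h1 := hQ0 r
    have h2 := hQ0 r'
    rw [pow_add, Nat.sub_mul, one_mul]
    have h3 : q ^ r' ≤ q ^ r * q ^ r' := Nat.le_mul_of_pos_left _ h1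
    omega
  case P3 =>
    intro r b hb
    obtain ⟨b, rfl⟩ := hsurj b
    rw [ne_eq, hmk0] at hb
    obtain ⟨u, -, hu⟩ := hsep r b hb
    refine ⟨mk (MvPolynomial.monomial u 1), ?_⟩
    rw [← map_mul, hκ, ne_eq, hmk0]
    exact hu
  case G1 =>
    rintro r _ r' _ ⟨g, rfl, hg⟩ ⟨g', rfl, hg'⟩
    refine ⟨g ^ (q ^ r') * g', by simp, ?_⟩
    have h1 := MvPolynomial.totalDegree_mul (g ^ (q ^ r')) g'
    have h2 := MvPolynomial.totalDegree_pow g (q ^ r')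
    have h3 : q ^ r' * g.totalDegree ≤ q ^ r' * ((ns + 1) * (q ^ r - 1)) :=
      Nat.mul_le_mul_left _ hg.le
    have h4 : (ns + 1) * (q ^ (r + r') - 1) = q ^ r' * ((ns + 1) * (q ^ r - 1)) +
        (ns + 1) * (q ^ r' - 1) := by
      have a1 := hQ0 r
      have a2 := hQ0 r'
      rw [pow_add]
      obtain ⟨a, ha⟩ : ∃ a, q ^ r = a + 1 := ⟨q ^ r - 1, by omega⟩
      obtain ⟨b, hb⟩ : ∃ b, q ^ r' = b + 1 := ⟨q ^ r' - 1, by omega⟩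
      rw [ha, hb]
      have : (a + 1) * (b + 1) - 1 = a * b + a + b := by
        have : (a + 1) * (b + 1) = a * b + a + b + 1 := by ring
        omega
      rw [this]
      simp only [Nat.add_sub_cancel]
      ring
    omega
  case G2 =>
    rintro r _ c ⟨g, rfl, hg⟩
    exact ⟨c • g, rfl, lt_of_le_of_lt (MvPolynomial.totalDegree_smul_le _ _) hg⟩
  case G3 =>
    rintro r _ a ⟨g, rfl, hg⟩ ha
    rw [memU] at ha ⊢
    obtain ⟨a, ha, rfl⟩ := ha
    rw [← map_mul, hκ]
    exact ⟨_, hdegT r g a hg ha, rfl⟩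
  case G4 =>
    intro l g
    obtain ⟨g, rfl⟩ := hsurj g
    refine ⟨g.totalDegree + 1, fun m hm b hb => ?_⟩
    obtain ⟨b, rfl⟩ := hsurj b
    rw [ne_eq, hmk0] at hb
    obtain ⟨u, hu, hu'⟩ := hsep m b hb
    refine ⟨mk (MvPolynomial.monomial u 1), ?_, (MvPolynomial.monomial u 1) ^ (q ^ l) * g,
      by simp, ?_⟩
    · rw [← map_mul, hκ, ne_eq, hmk0]
      exact hu'
    · have h1 := MvPolynomial.totalDegree_mul ((MvPolynomial.monomial u (1 : K)) ^ (q ^ l)) g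
      have h2 := MvPolynomial.totalDegree_pow (MvPolynomial.monomial u (1 : K)) (q ^ l)
      have h3 : (MvPolynomial.monomial u (1 : K)).totalDegree = u.degree :=
        MvPolynomial.totalDegree_monomial _ one_ne_zero
      rw [h3] at h2
      have h4 : q ^ l * u.degree ≤ q ^ l * (ns * (q ^ m - 1)) := Nat.mul_le_mul_left _ hu
      have h5 : m < q ^ m := Nat.lt_pow_self hq1
      have h6 : q ^ l * (ns * (q ^ m - 1)) + (q ^ m - 1) ≤ (ns + 1) * (q ^ (m + l) - 1) := by
        have a1 := hQ0 m
        have a2 := hQ0 l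
        rw [pow_add]
        obtain ⟨a, ha⟩ : ∃ a, q ^ m = a + 1 := ⟨q ^ m - 1, by omega⟩
        obtain ⟨b, hb⟩ : ∃ b, q ^ l = b + 1 := ⟨q ^ l - 1, by omega⟩
        rw [ha, hb]
        have : (a + 1) * (b + 1) - 1 = a * b + a + b := by
          have : (a + 1) * (b + 1) = a * b + a + b + 1 := by ring
          omega
        rw [this]
        simp only [Nat.add_sub_cancel]
        have : (ns + 1) * (a * b + a + b) = (b + 1) * (ns * a) + a + (a * b + ns * b + b) := by ring
        omega
      omega
  case hw => rwa [ne_eq, hmk0]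
  case hU =>
    refine ⟨1, (memU 1).2 ⟨1, by simp, by simp⟩, one_ne_zero⟩
  obtain ⟨lam, s, hsU, hs0, N0, hN⟩ := hmain
  refine ⟨N0, fun r hr L _ _ _ hL => ?_⟩
  obtain ⟨_, ⟨g, rfl, hg⟩, hwg, hgU⟩ := hN r hr
  obtain ⟨s, hsd, rfl⟩ := (memU s).1 hsU
  by_contra hcon
  push Not at hcon
  apply hs0
  have hqr : q ^ r = p ^ (n * r) := by rw [hq, ← pow_mul]
  refine trace_contra p (n * r) (hK r) L (by rw [hL, hcard, hqr]) E g s d hE.ne_zero rfl hsd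
    (by rw [← hqr]; exact hg)
    (lam.comp (Ideal.Quotient.mkₐ K (Ideal.span {E})).toLinearMap) ?_ ?_ ?_
  · have : mk E = 0 := (hmk0 E).2 dvd_rfl
    change lam (mk E) = 0
    rw [this, map_zero]
  · intro a ha
    rw [← hqr, ← hmk0, map_sub, sub_eq_zero, ← hκ, map_mul, hgU _ ((memU _).2 ⟨a, ha, rfl⟩)]
    rfl
  · intro z hz
    obtain ⟨c, hc⟩ := hwg
    obtain ⟨c, rfl⟩ := hsurj c
    rw [← map_mul, ← sub_eq_zero, ← map_sub, hmk0] at hc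
    obtain ⟨b, hb⟩ := hc
    have : g = w * c + E * b := by rw [← hb]; ring
    rw [this, map_add, map_mul, map_mul, hz, hcon z hz]
    simp

end TheoremA

section Const

theorem tdeg_pow {τ k : Type} [Field k] (u : MvPolynomial τ k) (hu : u ≠ 0) (n : ℕ) :
    (u ^ n).totalDegree = n * u.totalDegree := by
  induction n with
  | zero => simp
  | succ n ih =>
    rw [pow_succ, MvPolynomial.totalDegree_mul_of_isDomain (pow_ne_zero _ hu) hu, ih]
    ring

theorem ufd_const {τ k : Type} [Field k] (q : ℕ) (hq : 1 < q) (x y : MvPolynomial τ k)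
    (hy : y ≠ 0) (h : ∀ r : ℕ, ∃ a b : MvPolynomial τ k, a ≠ 0 ∧ a ^ (q ^ r) * x = b ^ (q ^ r) * y) :
    ∃ c : k, x = MvPolynomial.C c * y := by
  by_cases hx : x = 0
  · exact ⟨0, by simp [hx]⟩
  set r := x.totalDegree + y.totalDegree with hr
  obtain ⟨a, b, ha, hab⟩ := h r
  have hlt : r < q ^ r := Nat.lt_pow_self hq
  set Q := q ^ r with hQ
  obtain ⟨a', b', c', hrel, rfl, rfl⟩ := UniqueFactorizationMonoid.exists_reduced_factors a ha b
  have hc' : c' ≠ 0 := left_ne_zero_of_mul ha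
  have ha' : a' ≠ 0 := right_ne_zero_of_mul ha
  rw [mul_pow, mul_pow, mul_assoc, mul_assoc] at hab
  have hab' := mul_left_cancel₀ (pow_ne_zero _ hc') hab
  have hrel' : IsRelPrime (a' ^ Q) (b' ^ Q) := hrel.pow
  have h1 : a' ^ Q ∣ y := by
    refine hrel'.dvd_of_dvd_mul_left (Dvd.intro _ hab')
  have hb' : b' ≠ 0 := by
    rintro rfl
    rw [zero_pow (by omega), zero_mul] at hab'
    exact mul_ne_zero (pow_ne_zero _ ha') hx hab'
  have h2 : b' ^ Q ∣ x := by
    refine hrel'.symm.dvd_of_dvd_mul_left (Dvd.intro _ hab'.symm)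
  have key : ∀ u v : MvPolynomial τ k, u ≠ 0 → v ≠ 0 → u ^ Q ∣ v → v.totalDegree < Q →
      u = MvPolynomial.C (MvPolynomial.coeff 0 u) := by
    rintro u v hu hv ⟨w, rfl⟩ hlt
    have hw : w ≠ 0 := right_ne_zero_of_mul hv
    rw [MvPolynomial.totalDegree_mul_of_isDomain (pow_ne_zero _ hu) hw,
      tdeg_pow u hu] at hlt
    apply MvPolynomial.totalDegree_eq_zero_iff_eq_C.1
    by_contra hne
    have : Q * 1 ≤ Q * u.totalDegree := Nat.mul_le_mul_left _ (by omega)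
    omega
  have ka := key a' y ha' hy h1 (by omega)
  have kb := key b' x hb' hx h2 (by omega)
  set a0 := MvPolynomial.coeff 0 a'
  set b0 := MvPolynomial.coeff 0 b'
  have ha0 : a0 ≠ 0 := by
    intro h; rw [h, map_zero] at ka; exact ha' ka
  refine ⟨(a0 ^ Q)⁻¹ * b0 ^ Q, ?_⟩
  rw [ka, kb] at hab'
  rw [map_mul, mul_assoc, map_pow, ← hab', ← map_pow, ← mul_assoc, ← map_mul,
    inv_mul_cancel₀ (pow_ne_zero _ ha0), map_one, one_mul]

theorem exists_det_zero {k ι : Type} [Field k] [IsAlgClosed k] [Fintype ι] [DecidableEq ι]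
    [Nonempty ι] (S T : Matrix ι ι k) (hT : T.det ≠ 0) : ∃ t : k, (S + t • T).det = 0 := by
  have hu : IsUnit T.det := isUnit_iff_ne_zero.2 hT
  obtain ⟨t, ht⟩ := IsAlgClosed.exists_root (-(T⁻¹ * S)).charpoly (by
    rw [Matrix.charpoly_degree_eq_dim]
    exact_mod_cast Fintype.card_ne_zero)
  refine ⟨t, ?_⟩
  rw [Polynomial.IsRoot, Matrix.eval_charpoly] at ht
  have : S + t • T = T * (Matrix.scalar ι t - -(T⁻¹ * S)) := by
    rw [sub_neg_eq_add, mul_add, ← mul_assoc, Matrix.mul_nonsing_inv _ hu, one_mul, add_comm]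
    congr 1
    ext i j
    simp [Matrix.scalar_apply, Matrix.mul_diagonal, mul_comm]
  rw [this, Matrix.det_mul, ht, mul_zero]

theorem const_closed {τ k : Type} [Field k] [IsAlgClosed k] (p n : ℕ) [Fact p.Prime] [CharP k p]
    (hn : 0 < n) (F : Polynomial (MvPolynomial τ k)) (hF : F.Monic) (hFp : Prime F)
    (hdeg : 0 < F.natDegree) (s t : Polynomial (MvPolynomial τ k)) (ht : ¬ F ∣ t)
    (h : ∀ r : ℕ, ∃ α β : Polynomial (MvPolynomial τ k), ¬ F ∣ α ∧
      F ∣ α ^ ((p ^ n) ^ r) * s - β ^ ((p ^ n) ^ r) * t) :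
    ∃ c : k, F ∣ s - C (MvPolynomial.C c) * t := by
  classical
  have hp := (Fact.out : p.Prime)
  have hq1 : 1 < p ^ n := Nat.one_lt_pow hn.ne' hp.one_lt
  have hprime : (Ideal.span {F}).IsPrime := (Ideal.span_singleton_prime hFp.ne_zero).2 hFp
  have hdom : IsDomain (AdjoinRoot F) := AdjoinRoot.isDomain_of_prime hFp
  set B := MvPolynomial τ k with hB
  set b := (AdjoinRoot.powerBasis' hF).basis with hb
  have hdim : (AdjoinRoot.powerBasis' hF).dim = F.natDegree := AdjoinRoot.powerBasis'_dim hF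
  have hne : Nonempty (Fin (AdjoinRoot.powerBasis' hF).dim) := by
    rw [hdim]; exact ⟨⟨0, hdeg⟩⟩
  have : Module.Free B (AdjoinRoot F) := Module.Free.of_basis b
  have : Module.Finite B (AdjoinRoot F) := Module.Finite.of_basis b
  have hmk0 : ∀ x, AdjoinRoot.mk F x = 0 ↔ F ∣ x := fun x => AdjoinRoot.mk_eq_zero
  have : CharP B p := inferInstance
  have : CharP B[X] p := inferInstance
  have : ExpChar B[X] p := ExpChar.prime hp
  have hn0 : ∀ x : AdjoinRoot F, x ≠ 0 → Algebra.norm B x ≠ 0 := by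
    intro x hx h
    exact hx ((Algebra.norm_eq_zero_iff_of_basis b).1 h)
  set T := AdjoinRoot.mk F t with hTdef
  set S := AdjoinRoot.mk F s with hSdef
  have hT0 : T ≠ 0 := by rwa [ne_eq, hTdef, hmk0]
  have hc : ∀ t0 : k, ∃ c : k, Algebra.norm B (AdjoinRoot.mk F (s + C (MvPolynomial.C t0) * t)) =
      MvPolynomial.C c * Algebra.norm B T := by
    intro t0
    refine ufd_const (p ^ n) hq1 _ _ (hn0 T hT0) fun r => ?_
    obtain ⟨α, β, hα, hdvd⟩ := h r
    have hQ : 0 < (p ^ n) ^ r := pow_pos (by omega) r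
    obtain ⟨u, hu⟩ := IsAlgClosed.exists_pow_nat_eq t0 hQ
    refine ⟨Algebra.norm B (AdjoinRoot.mk F α),
      Algebra.norm B (AdjoinRoot.mk F (β + C (MvPolynomial.C u) * α)), hn0 _ ?_, ?_⟩
    · rwa [ne_eq, hmk0]
    · rw [← map_pow, ← map_pow, ← map_mul, ← map_mul, ← map_pow, ← map_pow, ← map_mul, hTdef,
        ← map_mul]
      congr 1
      rw [← sub_eq_zero, ← map_sub, hmk0]
      obtain ⟨w, hw⟩ := hdvd
      refine ⟨w, ?_⟩
      rw [← hw, ← pow_mul p n r, add_pow_expChar_pow, pow_mul p n r, mul_pow, ← map_pow, ← map_pow,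
        hu]
      ring
  -- choose a point
  obtain ⟨pt, hpt⟩ : ∃ pt : τ → k, MvPolynomial.eval pt (Algebra.norm B T) ≠ 0 := by
    by_contra hcon
    push Not at hcon
    refine hn0 T hT0 (MvPolynomial.funext fun x => ?_)
    rw [hcon x, map_zero]
  have hnorm : ∀ x, MvPolynomial.eval pt (Algebra.norm B x) =
      ((Algebra.leftMulMatrix b x).map (MvPolynomial.eval pt)).det := by
    intro x
    rw [Algebra.norm_eq_matrix_det b, RingHom.map_det]
    rfl
  rw [hnorm] at hpt
  obtain ⟨t0, ht0⟩ := exists_det_zero ((Algebra.leftMulMatrix b S).map (MvPolynomial.eval pt))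
    _ hpt
  obtain ⟨c, hc⟩ := hc t0
  refine ⟨-t0, ?_⟩
  have hmat : (Algebra.leftMulMatrix b (AdjoinRoot.mk F (s + C (MvPolynomial.C t0) * t))).map
      (MvPolynomial.eval pt) = (Algebra.leftMulMatrix b S).map (MvPolynomial.eval pt) +
      t0 • (Algebra.leftMulMatrix b T).map (MvPolynomial.eval pt) := by
    have h1 : AdjoinRoot.mk F (s + C (MvPolynomial.C t0) * t) =
        S + (MvPolynomial.C t0 : B) • T := by
      rw [map_add, map_mul, AdjoinRoot.mk_C, Algebra.smul_def]
      rfl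
    rw [h1, map_add, map_smul]
    ext i j
    simp
  have h2 := congrArg (MvPolynomial.eval pt) hc
  rw [hnorm, hmat, ht0, map_mul, MvPolynomial.eval_C, hnorm] at h2
  have hc0 : c = 0 := by
    rcases mul_eq_zero.1 h2.symm with h3 | h3
    · exact h3
    · exact absurd h3 hpt
  rw [hc0, map_zero, zero_mul, Algebra.norm_eq_zero_iff_of_basis b, hmk0] at hc
  have h5 : s - C (MvPolynomial.C (-t0)) * t = s + C (MvPolynomial.C t0) * t := by
    rw [map_neg, map_neg]; ring
  rw [h5]
  exact hc

end Const

section Descent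

variable {K : Type} [Field K]

/-- base change of coefficients to the algebraic closure -/
noncomputable abbrev bc (m : ℕ) (K : Type) [Field K] :
    MvPolynomial (Fin m) K →+* MvPolynomial (Fin m) (AlgebraicClosure K) :=
  MvPolynomial.map (algebraMap K (AlgebraicClosure K))

theorem bc_injective (m : ℕ) : Function.Injective (bc m K) :=
  MvPolynomial.map_injective _ (algebraMap K (AlgebraicClosure K)).injective

theorem prime_descent (m : ℕ) (F : Polynomial (MvPolynomial (Fin m) K)) (hF : F.Monic)
    (hdeg : 0 < F.natDegree) (hp : Prime (F.map (bc m K))) : Prime F := by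
  refine ⟨hF.ne_zero, ?_, ?_⟩
  · intro h
    have := hF.eq_one_of_isUnit h
    rw [this, natDegree_one] at hdeg
    omega
  · intro a b hab
    have h1 : F.map (bc m K) ∣ a.map (bc m K) * b.map (bc m K) := by
      rw [← Polynomial.map_mul]
      exact Polynomial.map_dvd _ hab
    rcases hp.dvd_or_dvd h1 with h | h
    · exact Or.inl ((Polynomial.map_dvd_map _ (bc_injective m) hF).1 h)
    · exact Or.inr ((Polynomial.map_dvd_map _ (bc_injective m) hF).1 h)

theorem const_descent (p n m : ℕ) [Fact p.Prime] [CharP K p] (hn : 0 < n)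
    (F : Polynomial (MvPolynomial (Fin m) K)) (hF : F.Monic)
    (hdeg : 0 < F.natDegree) (hp : Prime (F.map (bc m K)))
    (s t : Polynomial (MvPolynomial (Fin m) K)) (ht : ¬ F ∣ t)
    (h : ∀ r : ℕ, ∃ α β : Polynomial (MvPolynomial (Fin m) K), ¬ F ∣ α ∧
      F ∣ α ^ ((p ^ n) ^ r) * s - β ^ ((p ^ n) ^ r) * t) :
    ∃ c : K, F ∣ s - C (MvPolynomial.C c) * t := by
  have hchar : CharP (AlgebraicClosure K) p :=
    charP_of_injective_algebraMap (algebraMap K (AlgebraicClosure K)).injective p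
  have hd : ∀ y : Polynomial (MvPolynomial (Fin m) K), F.map (bc m K) ∣ y.map (bc m K) ↔ F ∣ y :=
    fun y => Polynomial.map_dvd_map (bc m K) (bc_injective m) hF
  set φ := bc m K with hφ
  have hF' : (F.map φ).Monic := hF.map φ
  obtain ⟨c, hc⟩ := const_closed p n hn (F.map φ) hF' hp
    (by rw [hF.natDegree_map]; exact hdeg) (s.map φ) (t.map φ) (by rwa [hd]) (by
      intro r
      obtain ⟨α, β, hα, hdvd⟩ := h r
      refine ⟨α.map φ, β.map φ, by rwa [hd], ?_⟩
      rw [← Polynomial.map_pow, ← Polynomial.map_pow, ← Polynomial.map_mul, ← Polynomial.map_mul,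
        ← Polynomial.map_sub]
      exact Polynomial.map_dvd _ hdvd)
  rw [← modByMonic_eq_zero_iff_dvd hF', sub_modByMonic, ← Polynomial.smul_eq_C_mul,
    smul_modByMonic, ← map_modByMonic _ hF, ← map_modByMonic _ hF, sub_eq_zero] at hc
  set s0 := s %ₘ F with hs0
  set t0 := t %ₘ F with ht0
  have ht00 : t0 ≠ 0 := by
    rwa [ht0, ne_eq, modByMonic_eq_zero_iff_dvd hF]
  have hco : ∀ i u, algebraMap K (AlgebraicClosure K) (MvPolynomial.coeff u (s0.coeff i)) =
      c * algebraMap K (AlgebraicClosure K) (MvPolynomial.coeff u (t0.coeff i)) := by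
    intro i u
    have := congrArg (fun P => MvPolynomial.coeff u (Polynomial.coeff P i)) hc
    simpa [hφ, bc, MvPolynomial.coeff_map] using this
  obtain ⟨i, hi⟩ : ∃ i, t0.coeff i ≠ 0 := by
    by_contra hcon
    push Not at hcon
    exact ht00 (Polynomial.ext (by simpa using hcon))
  obtain ⟨u, hu⟩ := MvPolynomial.ne_zero_iff.1 hi
  set c0 := MvPolynomial.coeff u (s0.coeff i) / MvPolynomial.coeff u (t0.coeff i) with hc0
  have hcc : c = algebraMap K (AlgebraicClosure K) c0 := by
    rw [hc0, map_div₀, hco, mul_div_assoc, div_self, mul_one]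
    rwa [ne_eq, map_eq_zero]
  refine ⟨c0, ?_⟩
  rw [← modByMonic_eq_zero_iff_dvd hF, sub_modByMonic, ← Polynomial.smul_eq_C_mul,
    smul_modByMonic, sub_eq_zero]
  ext i u
  have := hco i u
  rw [hcc, ← map_mul] at this
  rw [coeff_smul, smul_eq_mul, MvPolynomial.coeff_C_mul]
  exact (algebraMap K (AlgebraicClosure K)).injective this

theorem point_exists_three [Fintype K] (p n m : ℕ) [Fact p.Prime] [CharP K p] (hn : 0 < n)
    (hcard : Fintype.card K = p ^ n)
    (E w : MvPolynomial (Fin (m + 1 + 1)) K)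
    (hF : (MvPolynomial.finSuccEquiv K (m + 1) E).Monic)
    (hdeg : 0 < (MvPolynomial.finSuccEquiv K (m + 1) E).natDegree)
    (hp : Prime ((MvPolynomial.finSuccEquiv K (m + 1) E).map (bc (m + 1) K))) (hw : ¬ E ∣ w) :
    ∃ r0, ∀ r ≥ r0, ∀ (L : Type) [Field L] [Fintype L] [Algebra K L],
      Fintype.card L = Fintype.card K ^ r →
      ∃ z : Fin (m + 1 + 1) → L, MvPolynomial.aeval z E = 0 ∧ MvPolynomial.aeval z w ≠ 0 := by
  set e := MvPolynomial.finSuccEquiv K (m + 1) with he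
  set F := e E with hFdef
  have hd : ∀ x, E ∣ x ↔ F ∣ e x := fun x => (map_dvd_iff e).symm
  have hprime : Prime E := by
    rw [← MulEquiv.prime_iff e]
    exact prime_descent (m + 1) F hF hdeg hp
  refine point_exists p n hcard E w hprime hw ?_ ?_
  · refine Infinite.of_injective (fun j : ℕ => Ideal.Quotient.mk (Ideal.span {E})
      (e.symm (C (MvPolynomial.X 0 ^ j)))) ?_
    intro j j' hjj
    rw [Ideal.Quotient.eq, Ideal.mem_span_singleton, hd, map_sub, AlgEquiv.apply_symm_apply,
      AlgEquiv.apply_symm_apply, ← C_sub] at hjj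
    have h0 : (MvPolynomial.X 0 ^ j - MvPolynomial.X 0 ^ j' : MvPolynomial (Fin (m + 1)) K) = 0 := by
      by_contra hne
      have hne' : C (MvPolynomial.X 0 ^ j - MvPolynomial.X 0 ^ j' : MvPolynomial (Fin (m + 1)) K) ≠ 0 :=
        C_ne_zero.2 hne
      have := Polynomial.natDegree_le_of_dvd hjj hne'
      rw [natDegree_C] at this
      omega
    have h1 := congrArg (fun P => MvPolynomial.totalDegree P) (sub_eq_zero.1 h0)
    simpa using h1
  · intro s t ht h
    obtain ⟨s, rfl⟩ := Ideal.Quotient.mk_surjective s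
    obtain ⟨t, rfl⟩ := Ideal.Quotient.mk_surjective t
    rw [ne_eq, Ideal.Quotient.eq_zero_iff_mem, Ideal.mem_span_singleton, hd] at ht
    obtain ⟨c, hc⟩ := const_descent p n (m + 1) hn F hF hdeg hp (e s) (e t) ht (by
      intro r
      obtain ⟨α, β, hα, hab⟩ := h r
      obtain ⟨α, rfl⟩ := Ideal.Quotient.mk_surjective α
      obtain ⟨β, rfl⟩ := Ideal.Quotient.mk_surjective β
      rw [ne_eq, Ideal.Quotient.eq_zero_iff_mem, Ideal.mem_span_singleton, hd] at hα
      refine ⟨e α, e β, hα, ?_⟩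
      rw [← map_pow, ← map_pow, ← map_mul, ← map_mul, Ideal.Quotient.eq,
        Ideal.mem_span_singleton, hd] at hab
      simpa using hab)
    refine ⟨c, ?_⟩
    have h1 : c • Ideal.Quotient.mk (Ideal.span {E}) t =
      Ideal.Quotient.mk (Ideal.span {E}) (MvPolynomial.C c * t) := by
      rw [← MvPolynomial.smul_eq_C_mul]; rfl
    rw [h1, Ideal.Quotient.eq, Ideal.mem_span_singleton, hd, map_sub, map_mul]
    have h2 : e (MvPolynomial.C c) = C (MvPolynomial.C c) := by
      rw [he, MvPolynomial.finSuccEquiv_apply]; simp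
    rw [h2]
    exact hc

end Descent

section Irr

variable {k : Type} [Field k]

theorem irr_E0 (M m : ℕ) (b : k) (hb : b ≠ 0) (hM : (M : k) ≠ 0) :
    Irreducible (X ^ M + C (MvPolynomial.X 1 ^ M + MvPolynomial.C b * MvPolynomial.X 0 ^ m) :
      Polynomial (MvPolynomial (Fin 2) k)) := by
  have hM0 : M ≠ 0 := by rintro rfl; simp at hM
  set c0 : MvPolynomial (Fin 2) k :=
    MvPolynomial.X 1 ^ M + MvPolynomial.C b * MvPolynomial.X 0 ^ m with hc0
  have hX1 : Prime (MvPolynomial.X 1 : MvPolynomial (Fin 2) k) := MvPolynomial.X_prime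
  have hnd : ¬ (MvPolynomial.X 1 : MvPolynomial (Fin 2) k) ∣
      MvPolynomial.C b * MvPolynomial.X 0 ^ m := by
    rintro ⟨g, hg⟩
    have := congrArg (MvPolynomial.eval ![1, 0]) hg
    simp at this
    exact hb this
  have hc00 : c0 ≠ 0 := by
    intro h
    apply hnd
    have h1 : MvPolynomial.C b * MvPolynomial.X 0 ^ m = -(MvPolynomial.X 1 ^ M : MvPolynomial (Fin 2) k) := by
      linear_combination h
    rw [h1, dvd_neg]
    exact dvd_pow_self _ hM0
  have hc0u : ¬ IsUnit c0 := by
    intro h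
    have h1 := h.map (MvPolynomial.aeval ![(1 : k[X]), X] : MvPolynomial (Fin 2) k →ₐ[k] k[X])
    have h2 : (MvPolynomial.aeval ![(1 : k[X]), X] : MvPolynomial (Fin 2) k →ₐ[k] k[X]) c0 =
        X ^ M + C b := by
      simp [hc0]
    rw [h2] at h1
    have h3 := Polynomial.natDegree_eq_zero_of_isUnit h1
    rw [Polynomial.natDegree_X_pow_add_C] at h3
    exact hM0 h3
  obtain ⟨π, hπ, hπc⟩ := WfDvdMonoid.exists_irreducible_factor hc0u hc00
  have hπp : Prime π := hπ.prime
  have hπ2 : ¬ π ^ 2 ∣ c0 := by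
    rintro ⟨g, hg⟩
    have h1 : π ∣ MvPolynomial.pderiv 1 c0 := by
      rw [hg, pow_two, mul_assoc, Derivation.leibniz, Derivation.leibniz]
      simp only [smul_eq_mul]
      exact dvd_add (Dvd.intro _ rfl) (Dvd.intro _ rfl |>.mul_right _)
    have h2 : MvPolynomial.pderiv 1 c0 = MvPolynomial.C (M : k) * MvPolynomial.X 1 ^ (M - 1) := by
      rw [hc0]
      simp [MvPolynomial.pderiv_X, Derivation.leibniz_pow]
    rw [h2] at h1
    have h3 : π ∣ MvPolynomial.X 1 := by
      rcases hπp.dvd_or_dvd h1 with h | h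
      · exact absurd (isUnit_of_dvd_unit h ((isUnit_iff_ne_zero.2 hM).map MvPolynomial.C))
          hπp.not_isUnit
      · exact hπp.dvd_of_dvd_pow h
    have h4 : MvPolynomial.X 1 ∣ π := by
      exact (hπ.associated_of_dvd hX1.irreducible h3).symm.dvd
    apply hnd
    have h5 : MvPolynomial.X 1 ∣ c0 := h4.trans hπc
    rw [hc0] at h5
    exact (dvd_add_right (dvd_pow_self _ hM0)).1 h5
  have hdeg : (X ^ M + C c0 : Polynomial (MvPolynomial (Fin 2) k)).degree = M :=
    Polynomial.degree_X_pow_add_C (Nat.pos_of_ne_zero hM0) c0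
  have hmonic : (X ^ M + C c0 : Polynomial (MvPolynomial (Fin 2) k)).Monic :=
    Polynomial.monic_X_pow_add_C c0 hM0
  have hP : (Ideal.span {π}).IsPrime := (Ideal.span_singleton_prime hπp.ne_zero).2 hπp
  refine Polynomial.irreducible_of_eisenstein_criterion hP ?_ ?_ ?_ ?_ hmonic.isPrimitive
  · rw [hmonic.leadingCoeff]
    intro h
    exact hP.ne_top ((Ideal.eq_top_iff_one _).2 h)
  · intro n hn
    rw [hdeg] at hn
    have hn' : n < M := by exact_mod_cast hn
    rw [coeff_add, coeff_X_pow, if_neg hn'.ne, zero_add, coeff_C]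
    split_ifs
    · exact Ideal.mem_span_singleton.2 hπc
    · exact Ideal.zero_mem _
  · rw [hdeg]
    exact_mod_cast Nat.pos_of_ne_zero hM0
  · rw [coeff_add, coeff_X_pow, if_neg (Ne.symm hM0), zero_add, coeff_C_zero,
      Ideal.span_singleton_pow, Ideal.mem_span_singleton]
    exact hπ2

noncomputable def wHom (w : Fin 3 → ℕ) :
    MvPolynomial (Fin 3) k →ₐ[k] Polynomial (MvPolynomial (Fin 3) k) :=
  MvPolynomial.aeval (fun i => C (MvPolynomial.X i) * X ^ w i)

def wt (w : Fin 3 → ℕ) (u : Fin 3 →₀ ℕ) : ℕ := u 0 * w 0 + u 1 * w 1 + u 2 * w 2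

theorem wHom_monomial (w : Fin 3 → ℕ) (u : Fin 3 →₀ ℕ) (a : k) :
    wHom w (MvPolynomial.monomial u a) = C (MvPolynomial.monomial u a) * X ^ wt w u := by
  rw [wHom, MvPolynomial.aeval_monomial, MvPolynomial.monomial_eq, Finsupp.prod_fintype _ _ (by simp),
    Finsupp.prod_fintype _ _ (by simp)]
  rw [Fin.prod_univ_three, Fin.prod_univ_three]
  have : (algebraMap k (Polynomial (MvPolynomial (Fin 3) k))) a = C (MvPolynomial.C a) := rfl
  rw [this, wt]
  simp only [map_mul, map_pow, mul_pow]
  ring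

theorem coeff_wHom (w : Fin 3 → ℕ) (A : MvPolynomial (Fin 3) k) (j : ℕ) (u : Fin 3 →₀ ℕ) :
    MvPolynomial.coeff u ((wHom w A).coeff j) =
      if wt w u = j then MvPolynomial.coeff u A else 0 := by
  classical
  induction A using MvPolynomial.induction_on' with
  | monomial v a =>
    rw [wHom_monomial, coeff_C_mul_X_pow]
    by_cases hvu : v = u
    · subst hvu
      by_cases hj : wt w v = j
      · rw [if_pos hj.symm, if_pos hj]
      · rw [if_neg (Ne.symm hj), if_neg hj]; simp
    · rw [MvPolynomial.coeff_monomial, if_neg hvu, ite_self]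
      split_ifs
      · rw [MvPolynomial.coeff_monomial, if_neg hvu]
      · simp
  | add P Q hP hQ =>
    rw [map_add, coeff_add, MvPolynomial.coeff_add, hP, hQ, MvPolynomial.coeff_add]
    split_ifs <;> simp

theorem eval_wHom (w : Fin 3 → ℕ) (A : MvPolynomial (Fin 3) k) : (wHom w A).eval 1 = A := by
  induction A using MvPolynomial.induction_on' with
  | monomial v a => rw [wHom_monomial]; simp
  | add P Q hP hQ => rw [map_add, eval_add, hP, hQ]

theorem unit_of_lc (w : Fin 3 → ℕ) (A : MvPolynomial (Fin 3) k)
    (h : IsUnit (wHom w A).leadingCoeff) : IsUnit A := by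
  have h1 : MvPolynomial.coeff 0 (wHom w A).leadingCoeff ≠ 0 := by
    obtain ⟨c, hc, he⟩ := MvPolynomial.isUnit_iff_eq_C_of_isReduced.1 h
    rw [he]; simpa using hc.ne_zero
  rw [leadingCoeff, coeff_wHom] at h1
  have h2 : (wHom w A).natDegree = 0 := by
    by_contra h3
    apply h1
    rw [if_neg]
    simpa [wt] using Ne.symm h3
  have h3 := eval_wHom w A
  rw [Polynomial.eq_C_of_natDegree_eq_zero h2, eval_C] at h3
  rw [leadingCoeff, h2, h3] at h
  exact h

theorem irr_of_lc (w : Fin 3 → ℕ) (A : MvPolynomial (Fin 3) k)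
    (h : Irreducible (wHom w A).leadingCoeff) : Irreducible A := by
  refine ⟨?_, ?_⟩
  · intro hA
    apply h.not_isUnit
    have := hA.map (wHom w)
    obtain ⟨r, hr, he⟩ := Polynomial.isUnit_iff.1 this
    rw [← he, leadingCoeff_C]; exact hr
  · intro a b hab
    rw [hab, map_mul, leadingCoeff_mul] at h
    rcases h.isUnit_or_isUnit rfl with h1 | h1
    · exact Or.inl (unit_of_lc w a h1)
    · exact Or.inr (unit_of_lc w b h1)

theorem irr_E0_mv (M m : ℕ) (b : k) (hb : b ≠ 0) (hM : (M : k) ≠ 0) :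
    Irreducible (MvPolynomial.X 0 ^ M + MvPolynomial.X 2 ^ M +
      MvPolynomial.C b * MvPolynomial.X 1 ^ m : MvPolynomial (Fin 3) k) := by
  rw [← MulEquiv.irreducible_iff (MvPolynomial.finSuccEquiv k 2)]
  have := irr_E0 M m b hb hM
  convert this using 1
  have h1 : (MvPolynomial.finSuccEquiv k 2) (MvPolynomial.X 1) = C (MvPolynomial.X 0) :=
    MvPolynomial.finSuccEquiv_X_succ (j := (0 : Fin 2))
  have h2 : (MvPolynomial.finSuccEquiv k 2) (MvPolynomial.X 2) = C (MvPolynomial.X 1) :=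
    MvPolynomial.finSuccEquiv_X_succ (j := (1 : Fin 2))
  have h3 : (MvPolynomial.finSuccEquiv k 2) (MvPolynomial.C b) = C (MvPolynomial.C b) := by
    simp [MvPolynomial.finSuccEquiv_apply]
  simp only [map_add, map_mul, map_pow, h1, h2, h3, MvPolynomial.finSuccEquiv_X_zero]
  ring

theorem irr_E (M m : ℕ) (H : MvPolynomial (Fin 3) k) (hH : H.totalDegree ≤ m) (hm : m < M)
    (hb : MvPolynomial.coeff (Finsupp.single 1 m) H ≠ 0) (hM : (M : k) ≠ 0) :
    Irreducible (MvPolynomial.X 0 ^ M + MvPolynomial.X 2 ^ M + H : MvPolynomial (Fin 3) k) := by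
  classical
  set b := MvPolynomial.coeff (Finsupp.single 1 m) H with hbdef
  have hE0 := irr_E0_mv M m b hb hM
  rcases Nat.eq_zero_or_pos m with rfl | hmpos
  · have : H = MvPolynomial.C b := by
      rw [MvPolynomial.totalDegree_eq_zero_iff_eq_C.1 (Nat.le_zero.1 hH)]
      simp [hbdef]
    rw [this]
    simpa using hE0
  set w : Fin 3 → ℕ := ![m, M, m] with hw
  have hwt : ∀ u : Fin 3 →₀ ℕ, wt w u = u 0 * m + u 1 * M + u 2 * m := by
    intro u; simp [wt, hw]
  set E : MvPolynomial (Fin 3) k := MvPolynomial.X 0 ^ M + MvPolynomial.X 2 ^ M + H with hE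
  set E0 : MvPolynomial (Fin 3) k := MvPolynomial.X 0 ^ M + MvPolynomial.X 2 ^ M +
      MvPolynomial.C b * MvPolynomial.X 1 ^ m with hE0def
  have hcH : ∀ u : Fin 3 →₀ ℕ, m < u 0 + u 1 + u 2 → MvPolynomial.coeff u H = 0 := by
    intro u hu
    apply MvPolynomial.coeff_eq_zero_of_totalDegree_lt
    have : ∑ i ∈ u.support, u i = u 0 + u 1 + u 2 := by
      rw [Finset.sum_subset (Finset.subset_univ _), Fin.sum_univ_three]
      intro i _ hi; simpa using hi
    omega
  have hcX : ∀ u : Fin 3 →₀ ℕ, ∀ i : Fin 3, i ≠ 1 → wt w u ≠ M * m →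
      MvPolynomial.coeff u (MvPolynomial.X i ^ M : MvPolynomial (Fin 3) k) = 0 := by
    intro u i hi hu
    rw [MvPolynomial.coeff_X_pow, if_neg]
    rintro rfl
    apply hu
    rw [hwt]
    fin_cases i <;> simp at hi ⊢
  have hkey : ∀ u : Fin 3 →₀ ℕ, u 0 + u 1 + u 2 ≤ m → M * m ≤ wt w u → u = Finsupp.single 1 m := by
    intro u h1 h2
    rw [hwt] at h2
    have h3 : u 0 = 0 ∧ u 2 = 0 := by
      by_contra hc
      have : 1 ≤ u 0 + u 2 := by omega
      nlinarith
    have h4 : u 1 = m := by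
      have : M * m ≤ M * u 1 := by rw [h3.1, h3.2] at h2; linarith
      have := Nat.le_of_mul_le_mul_left this (by omega)
      omega
    ext i
    fin_cases i
    · simpa using h3.1
    · simpa using h4
    · simpa using h3.2
  have hwy : wt w (Finsupp.single 1 m) = M * m := by rw [hwt]; simp [mul_comm]
  have hcoef : (wHom w E).coeff (M * m) = E0 := by
    ext u
    rw [coeff_wHom]
    have hE0u : MvPolynomial.coeff u (MvPolynomial.C b * MvPolynomial.X 1 ^ m : MvPolynomial (Fin 3) k)
        = if Finsupp.single 1 m = u then b else 0 := by
      rw [MvPolynomial.coeff_C_mul, MvPolynomial.coeff_X_pow]; simp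
    split_ifs with hu
    · rw [hE, hE0def, MvPolynomial.coeff_add, MvPolynomial.coeff_add _ _ (MvPolynomial.C b * _), hE0u]
      congr 1
      split_ifs with h1
      · rw [← h1]
      · by_cases h2 : u 0 + u 1 + u 2 ≤ m
        · exact absurd (hkey u h2 hu.ge).symm h1
        · exact hcH u (by omega)
    · rw [hE0def, MvPolynomial.coeff_add, MvPolynomial.coeff_add, hE0u,
        hcX u 0 (by decide) hu, hcX u 2 (by decide) hu, if_neg]
      · simp
      · rintro rfl; exact hu hwy
  have hdeg : (wHom w E).natDegree = M * m := by
    apply le_antisymm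
    · rw [Polynomial.natDegree_le_iff_coeff_eq_zero]
      intro j hj
      ext u
      rw [coeff_wHom]
      split_ifs with hu
      · rw [hE, MvPolynomial.coeff_add, MvPolynomial.coeff_add, hcX u 0 (by decide) (by omega),
          hcX u 2 (by decide) (by omega)]
        by_cases h2 : u 0 + u 1 + u 2 ≤ m
        · have := hkey u h2 (by omega)
          rw [this, hwy] at hu
          omega
        · rw [hcH u (by omega)]; simp
      · simp
    · apply Polynomial.le_natDegree_of_ne_zero
      rw [hcoef]; exact hE0.ne_zero
  apply irr_of_lc w
  rw [leadingCoeff, hdeg, hcoef]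
  exact hE0

end Irr

section HCons

variable {K : Type} [Field K]

noncomputable def secDiff (h : K[X]) : MvPolynomial (Fin 3) K :=
  aeval (MvPolynomial.X 1 + MvPolynomial.X 0 + MvPolynomial.X 2 : MvPolynomial (Fin 3) K) h
    - aeval (MvPolynomial.X 1 + MvPolynomial.X 0 : MvPolynomial (Fin 3) K) h
    - aeval (MvPolynomial.X 1 + MvPolynomial.X 2 : MvPolynomial (Fin 3) K) h
    + aeval (MvPolynomial.X 1 : MvPolynomial (Fin 3) K) h

theorem aeval_sub_dvd {A : Type} [CommRing A] [Algebra K A] (h : K[X]) (a b : A) :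
    a - b ∣ aeval a h - aeval b h := by
  rw [aeval_def, aeval_def, eval₂_eq_eval_map, eval₂_eq_eval_map]
  exact Polynomial.sub_dvd_eval_sub a b _

theorem secDiff_dvd (h : K[X]) :
    (MvPolynomial.X 0 * MvPolynomial.X 2 : MvPolynomial (Fin 3) K) ∣ secDiff h := by
  have h0 : (MvPolynomial.X 0 : MvPolynomial (Fin 3) K) ∣ secDiff h := by
    have e1 := aeval_sub_dvd h (MvPolynomial.X 1 + MvPolynomial.X 0 + MvPolynomial.X 2 : MvPolynomial (Fin 3) K)
      (MvPolynomial.X 1 + MvPolynomial.X 2)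
    have e2 := aeval_sub_dvd h (MvPolynomial.X 1 + MvPolynomial.X 0 : MvPolynomial (Fin 3) K)
      (MvPolynomial.X 1)
    have r1 : (MvPolynomial.X 1 + MvPolynomial.X 0 + MvPolynomial.X 2 : MvPolynomial (Fin 3) K) -
      (MvPolynomial.X 1 + MvPolynomial.X 2) = MvPolynomial.X 0 := by ring
    have r2 : (MvPolynomial.X 1 + MvPolynomial.X 0 : MvPolynomial (Fin 3) K) -
      (MvPolynomial.X 1) = MvPolynomial.X 0 := by ring
    rw [r1] at e1
    rw [r2] at e2
    convert dvd_sub e1 e2 using 1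
    unfold secDiff; ring
  have h2 : (MvPolynomial.X 2 : MvPolynomial (Fin 3) K) ∣ secDiff h := by
    have e1 := aeval_sub_dvd h (MvPolynomial.X 1 + MvPolynomial.X 0 + MvPolynomial.X 2 : MvPolynomial (Fin 3) K)
      (MvPolynomial.X 1 + MvPolynomial.X 0)
    have e2 := aeval_sub_dvd h (MvPolynomial.X 1 + MvPolynomial.X 2 : MvPolynomial (Fin 3) K)
      (MvPolynomial.X 1)
    have r1 : (MvPolynomial.X 1 + MvPolynomial.X 0 + MvPolynomial.X 2 : MvPolynomial (Fin 3) K) -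
      (MvPolynomial.X 1 + MvPolynomial.X 0) = MvPolynomial.X 2 := by ring
    have r2 : (MvPolynomial.X 1 + MvPolynomial.X 2 : MvPolynomial (Fin 3) K) -
      (MvPolynomial.X 1) = MvPolynomial.X 2 := by ring
    rw [r1] at e1
    rw [r2] at e2
    convert dvd_sub e1 e2 using 1
    unfold secDiff; ring
  obtain ⟨g, hg⟩ := h0
  rw [hg] at h2 ⊢
  apply mul_dvd_mul_left
  rcases (MvPolynomial.X_prime (R := K) (i := (2 : Fin 3))).dvd_or_dvd h2 with h | h
  · rw [MvPolynomial.X_dvd_X] at h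
    simp at h
  · exact h

theorem totalDegree_aeval_le (h : K[X]) (a : MvPolynomial (Fin 3) K) (ha : a.totalDegree ≤ 1) :
    (aeval a h).totalDegree ≤ h.natDegree := by
  rw [aeval_eq_sum_range]
  apply MvPolynomial.totalDegree_finsetSum_le
  intro i hi
  refine (MvPolynomial.totalDegree_smul_le _ _).trans ((MvPolynomial.totalDegree_pow _ _).trans ?_)
  have := Finset.mem_range.1 hi
  nlinarith

theorem secDiff_totalDegree (h : K[X]) : (secDiff h).totalDegree ≤ h.natDegree := by
  have hX : ∀ i : Fin 3, (MvPolynomial.X i : MvPolynomial (Fin 3) K).totalDegree ≤ 1 := by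
    intro i; rw [MvPolynomial.totalDegree_X]
  have hadd : ∀ a b : MvPolynomial (Fin 3) K, ∀ n, a.totalDegree ≤ n → b.totalDegree ≤ n →
      (a + b).totalDegree ≤ n := fun a b n ha hb =>
    (MvPolynomial.totalDegree_add a b).trans (max_le ha hb)
  have hsub : ∀ a b : MvPolynomial (Fin 3) K, ∀ n, a.totalDegree ≤ n → b.totalDegree ≤ n →
      (a - b).totalDegree ≤ n := fun a b n ha hb =>
    (MvPolynomial.totalDegree_sub a b).trans (max_le ha hb)
  unfold secDiff
  refine hadd _ _ _ (hsub _ _ _ (hsub _ _ _ ?_ ?_) ?_) ?_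
  · exact totalDegree_aeval_le _ _ (hadd _ _ _ (hadd _ _ _ (hX _) (hX _)) (hX _))
  · exact totalDegree_aeval_le _ _ (hadd _ _ _ (hX _) (hX _))
  · exact totalDegree_aeval_le _ _ (hadd _ _ _ (hX _) (hX _))
  · exact totalDegree_aeval_le _ _ (hX _)

theorem pderiv_secDiff (h : K[X]) :
    MvPolynomial.pderiv 0 (MvPolynomial.pderiv 2 (secDiff h)) =
    aeval (MvPolynomial.X 1 + MvPolynomial.X 0 + MvPolynomial.X 2 : MvPolynomial (Fin 3) K)
      (derivative (derivative h)) := by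
  unfold secDiff
  simp [Derivation.map_aeval, MvPolynomial.pderiv_X]

theorem eval_H (h : K[X]) (H : MvPolynomial (Fin 3) K)
    (hH : secDiff h = MvPolynomial.X 0 * MvPolynomial.X 2 * H) :
    MvPolynomial.aeval ![(0 : K[X]), X, 0] H = derivative (derivative h) := by
  have h1 := pderiv_secDiff h
  rw [hH] at h1
  have h2 := congrArg (MvPolynomial.aeval ![(0 : K[X]), X, 0]) h1
  have h3 : ∀ g : K[X], MvPolynomial.aeval ![(0 : K[X]), X, 0]
    (aeval (MvPolynomial.X 1 + MvPolynomial.X 0 + MvPolynomial.X 2 : MvPolynomial (Fin 3) K) g) = g := by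
    intro g
    rw [← aeval_algHom_apply]
    simp
  rw [h3] at h2
  rw [← h2]
  simp [Derivation.leibniz, MvPolynomial.pderiv_X]

theorem coeff_of_aeval (H : MvPolynomial (Fin 3) K) (m : ℕ) :
    (MvPolynomial.aeval ![(0 : K[X]), X, 0] H).coeff m = MvPolynomial.coeff (Finsupp.single 1 m) H := by
  classical
  induction H using MvPolynomial.induction_on' with
  | monomial u a =>
    rw [MvPolynomial.aeval_monomial, Finsupp.prod_fintype _ _ (by simp), Fin.prod_univ_three,
      MvPolynomial.coeff_monomial]
    simp only [Matrix.cons_val_zero, Matrix.cons_val_one, Matrix.cons_val]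
    by_cases h0 : u 0 = 0
    · by_cases h2 : u 2 = 0
      · rw [h0, h2]
        have : (u = Finsupp.single 1 m) ↔ m = u 1 := by
          constructor
          · intro h; rw [h]; simp
          · rintro rfl
            ext i; fin_cases i <;> simp [h0, h2]
        simp [this, Polynomial.coeff_X_pow]
      · rw [if_neg]
        · simp [h2]
        · rintro rfl; simp at h2
    · rw [if_neg]
      · simp [h0]
      · rintro rfl; simp at h0
  | add P Q hP hQ => rw [map_add, coeff_add, hP, hQ, MvPolynomial.coeff_add]

theorem exists_H (h : K[X]) (he : 2 ≤ h.natDegree) (hne : ((h.natDegree : K)) ≠ 0)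
    (hne1 : ((h.natDegree : K)) - 1 ≠ 0) :
    ∃ H : MvPolynomial (Fin 3) K, secDiff h = MvPolynomial.X 0 * MvPolynomial.X 2 * H ∧
      H.totalDegree ≤ h.natDegree - 2 ∧
      MvPolynomial.coeff (Finsupp.single 1 (h.natDegree - 2)) H ≠ 0 := by
  obtain ⟨H, hH⟩ := secDiff_dvd h
  have hc : MvPolynomial.coeff (Finsupp.single 1 (h.natDegree - 2)) H ≠ 0 := by
    rw [← coeff_of_aeval, eval_H h H hH, coeff_derivative, coeff_derivative]
    obtain ⟨d, hd⟩ : ∃ d, h.natDegree = d + 2 := ⟨h.natDegree - 2, by omega⟩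
    have hl : h.coeff (d + 2) ≠ 0 := by
      rw [← hd]
      exact leadingCoeff_ne_zero.2 (by rintro rfl; simp at he)
    rw [hd] at hne hne1 ⊢
    push_cast at hne hne1 ⊢
    refine mul_ne_zero (mul_ne_zero hl ?_) ?_
    · intro h0; apply hne; linear_combination h0
    · intro h0; apply hne1; linear_combination h0
  refine ⟨H, hH, ?_, hc⟩
  have hH0 : H ≠ 0 := by rintro rfl; simp at hc
  have h1 := secDiff_totalDegree h
  rw [hH, MvPolynomial.totalDegree_mul_of_isDomain (mul_ne_zero (MvPolynomial.X_ne_zero _) (MvPolynomial.X_ne_zero _)) hH0,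
    MvPolynomial.totalDegree_mul_of_isDomain (MvPolynomial.X_ne_zero _) (MvPolynomial.X_ne_zero _),
    MvPolynomial.totalDegree_X, MvPolynomial.totalDegree_X] at h1
  omega

theorem map_finSucc {L : Type} [Field L] (φ : K →+* L) (E : MvPolynomial (Fin 3) K) :
    (MvPolynomial.finSuccEquiv K 2 E).map (MvPolynomial.map φ) =
      MvPolynomial.finSuccEquiv L 2 (MvPolynomial.map φ E) := by
  induction E using MvPolynomial.induction_on with
  | C a => simp [MvPolynomial.finSuccEquiv_apply]
  | add P Q hP hQ => simp only [map_add, Polynomial.map_add, hP, hQ]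
  | mul_X P i hP =>
    simp only [map_mul, Polynomial.map_mul, hP, MvPolynomial.map_X]
    congr 1
    refine Fin.cases ?_ (fun j => ?_) i
    · simp [MvPolynomial.finSuccEquiv_X_zero]
    · simp [MvPolynomial.finSuccEquiv_X_succ]

theorem E_monic (M m : ℕ) (H : MvPolynomial (Fin 3) K) (hH : H.totalDegree ≤ m) (hm : m < M) :
    (MvPolynomial.finSuccEquiv K 2
      (MvPolynomial.X 0 ^ M + MvPolynomial.X 2 ^ M + H)).Monic ∧
    (MvPolynomial.finSuccEquiv K 2
      (MvPolynomial.X 0 ^ M + MvPolynomial.X 2 ^ M + H)).natDegree = M := by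
  have h2 : (MvPolynomial.finSuccEquiv K 2) (MvPolynomial.X 2) = C (MvPolynomial.X 1) :=
    MvPolynomial.finSuccEquiv_X_succ (j := (1 : Fin 2))
  have hd : (C (MvPolynomial.X 1) ^ M + MvPolynomial.finSuccEquiv K 2 H).degree < (M : WithBot ℕ) := by
    refine (degree_add_le _ _).trans_lt (max_lt ?_ ?_)
    · rw [← C_pow]
      refine degree_C_le.trans_lt ?_
      exact_mod_cast (by omega : 0 < M)
    · refine degree_le_natDegree.trans_lt ?_
      rw [MvPolynomial.natDegree_finSuccEquiv]
      exact_mod_cast ((MvPolynomial.degreeOf_le_totalDegree _ _).trans hH).trans_lt hm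
  rw [map_add, map_add, map_pow, map_pow, MvPolynomial.finSuccEquiv_X_zero, h2, add_assoc]
  exact ⟨monic_X_pow_add hd, natDegree_eq_of_degree_eq_some (by
    rw [degree_add_eq_left_of_degree_lt (by rwa [degree_X_pow]), degree_X_pow])⟩

end HCons

section Final

theorem prime_E {K : Type} [Field K] (M m : ℕ) (H : MvPolynomial (Fin 3) K)
    (hH : H.totalDegree ≤ m) (hm : m < M)
    (hb : MvPolynomial.coeff (Finsupp.single 1 m) H ≠ 0) (hM : (M : K) ≠ 0) :
    Prime ((MvPolynomial.finSuccEquiv K 2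
      (MvPolynomial.X 0 ^ M + MvPolynomial.X 2 ^ M + H)).map (bc 2 K)) := by
  have h1 := map_finSucc (algebraMap K (AlgebraicClosure K))
    (MvPolynomial.X 0 ^ M + MvPolynomial.X 2 ^ M + H)
  rw [bc, h1, MulEquiv.prime_iff]
  refine Irreducible.prime ?_
  simp only [map_add, map_pow, MvPolynomial.map_X]
  refine irr_E M m _ ?_ hm ?_ ?_
  · exact (Finset.sup_mono (MvPolynomial.support_map_subset _ _)).trans hH
  · rw [MvPolynomial.coeff_map]
    simpa using hb
  · have := (map_ne_zero (algebraMap K (AlgebraicClosure K))).2 hM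
    simpa using this

theorem E_not_dvd {K : Type} [Field K] (M m : ℕ) (H : MvPolynomial (Fin 3) K)
    (hH : H.totalDegree ≤ m) (hm : m < M) (hM : 2 ≤ M) :
    ¬ (MvPolynomial.X 0 ^ M + MvPolynomial.X 2 ^ M + H) ∣
      (MvPolynomial.X 0 * MvPolynomial.X 2 : MvPolynomial (Fin 3) K) := by
  intro hd
  have h1 := map_dvd (MvPolynomial.finSuccEquiv K 2) hd
  have h2 : (MvPolynomial.finSuccEquiv K 2) (MvPolynomial.X 2) = C (MvPolynomial.X 1) :=
    MvPolynomial.finSuccEquiv_X_succ (j := (1 : Fin 2))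
  rw [map_mul, h2, MvPolynomial.finSuccEquiv_X_zero] at h1
  have h3 := Polynomial.natDegree_le_of_dvd h1
    (mul_ne_zero X_ne_zero (C_ne_zero.2 (MvPolynomial.X_ne_zero _)))
  rw [(E_monic M m H hH hm).2] at h3
  have h4 : (X * C (MvPolynomial.X 1) : (MvPolynomial (Fin 2) K)[X]).natDegree ≤ 1 := by
    refine natDegree_mul_le.trans ?_
    simp
  omega

theorem frob_diff {L : Type} [CommRing L] (p k : ℕ) [Fact p.Prime] [CharP L p] (y d e : L) :
    (y + d + e) ^ (p ^ k + 1) - (y + d) ^ (p ^ k + 1) - (y + e) ^ (p ^ k + 1) + y ^ (p ^ k + 1)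
      = d ^ (p ^ k) * e + d * e ^ (p ^ k) := by
  simp only [pow_succ _ (p ^ k), add_pow_char_pow]
  ring

theorem secDiff_eval {K L : Type} [Field K] [Field L] [Algebra K L] (h : K[X]) (z : Fin 3 → L) :
    MvPolynomial.aeval z (secDiff h) = aeval (z 1 + z 0 + z 2) h - aeval (z 1 + z 0) h
      - aeval (z 1 + z 2) h + aeval (z 1) h := by
  unfold secDiff
  simp only [map_add, map_sub, ← aeval_algHom_apply, MvPolynomial.aeval_X]

end Final

theorem exceptional_planar_pow_add_one_plus_h
    (p n k : ℕ) (hp : p.Prime) (hodd : Odd p) (hn : 0 < n) (hk : 0 < k)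
    (K : Type) [Field K] [Fintype K] (hK : Fintype.card K = p ^ n)
    (f h : K[X]) (hf : f = X ^ (p ^ k + 1) + h) (he : h.natDegree < p ^ k + 1)
    (hexc : IsExceptionalPlanarOdd f) :
    (p : ℤ) ∣ (h.natDegree : ℤ) ∨ (p : ℤ) ∣ (h.natDegree : ℤ) - 1 := by
  by_contra hcon
  push Not at hcon
  obtain ⟨hc0, hc1⟩ := hcon
  haveI : Fact p.Prime := ⟨hp⟩
  haveI : CharP K p := charP_of_card_eq_prime_pow hK
  have hne : (h.natDegree : K) ≠ 0 := by
    intro h0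
    exact hc0 (by exact_mod_cast (CharP.cast_eq_zero_iff K p _).1 h0)
  have hne1 : (h.natDegree : K) - 1 ≠ 0 := by
    intro h0
    apply hc1
    rw [← CharP.intCast_eq_zero_iff K p]
    push_cast
    exact h0
  have he2 : 2 ≤ h.natDegree := by
    by_contra hlt
    have : h.natDegree = 0 ∨ h.natDegree = 1 := by omega
    rcases this with h0 | h0
    · rw [h0] at hne; simp at hne
    · rw [h0] at hne1; simp at hne1
  have heq : h.natDegree ≠ p ^ k := by
    intro h0
    apply hc0
    rw [h0]
    exact_mod_cast dvd_pow_self p hk.ne'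
  have hp3 : 3 ≤ p := by
    have := hp.two_le
    rcases hodd with ⟨t, ht⟩
    omega
  have hq3 : 3 ≤ p ^ k := hp3.trans (Nat.le_self_pow hk.ne' p)
  obtain ⟨H, hH, hHd, hHc⟩ := exists_H h he2 hne hne1
  obtain ⟨M, hMq⟩ : ∃ M, p ^ k = M + 1 := ⟨p ^ k - 1, by omega⟩
  have hmM : h.natDegree - 2 < M := by omega
  have hM : (M : K) ≠ 0 := by
    intro h0
    have h1 : ((p ^ k : ℕ) : K) = 0 := by
      rw [CharP.cast_eq_zero_iff K p]
      exact dvd_pow_self p hk.ne'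
    rw [hMq] at h1
    push_cast at h1
    rw [h0] at h1
    simp at h1
  obtain ⟨hmon, hnat⟩ := E_monic M _ H hHd hmM
  obtain ⟨r0, hr0⟩ := point_exists_three p n 1 hn hK
    (MvPolynomial.X 0 ^ M + MvPolynomial.X 2 ^ M + H) (MvPolynomial.X 0 * MvPolynomial.X 2)
    hmon (by rw [hnat]; omega) (prime_E M _ H hHd hmM hHc hM)
    (E_not_dvd M _ H hHd hmM (by omega))
  obtain ⟨r, ⟨hrpos, hr⟩, hrr⟩ := Set.Infinite.exists_gt hexc r0
  haveI : NeZero r := ⟨hrpos.ne'⟩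
  let L := FiniteField.Extension K p r
  letI : Fintype L := Fintype.ofFinite L
  have hcardL : Fintype.card L = Fintype.card K ^ r := by
    have := FiniteField.natCard_extension K p r
    rw [Nat.card_eq_fintype_card, Nat.card_eq_fintype_card] at this
    exact this
  obtain ⟨z, hz, hzw⟩ := hr0 r hrr.le L hcardL
  have hz02 : z 0 ≠ 0 ∧ z 2 ≠ 0 := by
    rw [map_mul, MvPolynomial.aeval_X, MvPolynomial.aeval_X] at hzw
    exact mul_ne_zero_iff.1 hzw
  have hpl := hr L hcardL (z 2) hz02.2
  have hsec := secDiff_eval h z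
  rw [hH] at hsec
  haveI : CharP L p := charP_of_injective_algebraMap (algebraMap K L).injective p
  have hfr := frob_diff p k (z 1) (z 0) (z 2)
  simp only [map_add, map_mul, map_pow, MvPolynomial.aeval_X] at hz hsec
  have hinj := hpl.1
  have heqv : (fun x : L => aeval (x + z 2) f - aeval x f) (z 1 + z 0) =
      (fun x : L => aeval (x + z 2) f - aeval x f) (z 1) := by
    simp only [hf, map_add, map_pow, aeval_X]
    rw [hMq] at hfr ⊢
    linear_combination hfr - hsec + z 0 * z 2 * hz
  have := hinj heqv
  apply hz02.1
  simpa using this
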